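/- arXiv:1305.1979 — 3 statements merged into one kernel-verified Lean document; each statement's English description precedes it below -/
import Mathlib

section
/- For every projection game G, every ρ with 0 < ρ ≤ 1 such that val(G) ≤ ρ, and every positive integer k, the k-fold parallel repetition satisfies val(G^{⊗k}) ≤ (2√ρ/(1+ρ))^{k/2}. -/
open Finset

/-- A projection game: finite nonempty question sets `Q1` (Alice) and `Q2` (Bob),
a finite nonempty alphabet `A`, and a probability mass function `μ` on triples
`(u, v, π)` where `π : A → Option A` encodes a projection constraint
(the answer pair `(α, β)` satisfies `π` iff `π β = some α`). -/
structure ProjGame where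
  Q1 : Type
  Q2 : Type
  A : Type
  [fQ1 : Fintype Q1]
  [fQ2 : Fintype Q2]
  [fA : Fintype A]
  [neQ1 : Nonempty Q1]
  [neQ2 : Nonempty Q2]
  [neA : Nonempty A]
  [dQ1 : DecidableEq Q1]
  [dQ2 : DecidableEq Q2]
  [dA : DecidableEq A]
  μ : Q1 × Q2 × (A → Option A) → ℝ
  μ_nonneg : ∀ x, 0 ≤ μ x
  μ_sum : ∑ x, μ x = 1

attribute [instance] ProjGame.fQ1 ProjGame.fQ2 ProjGame.fA
  ProjGame.neQ1 ProjGame.neQ2 ProjGame.neA ProjGame.dQ1 ProjGame.dQ2 ProjGame.dA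

namespace ProjGame

variable (G : ProjGame)

/-- The `U`-marginal (Alice-side marginal) of `μ`. -/
noncomputable def wU (u : G.Q1) : ℝ := ∑ v, ∑ π, G.μ (u, v, π)

/-- The `V`-marginal (Bob-side marginal) of `μ`. -/
noncomputable def wV (v : G.Q2) : ℝ := ∑ u, ∑ π, G.μ (u, v, π)

/-- The game operator: `(Gf)(u,α) = E_{(v,π)|u} [∑_{β : π β = some α} f (v,β)]`. -/
noncomputable def op (f : G.Q2 × G.A → ℝ) : G.Q1 × G.A → ℝ :=
  fun p =>
    (∑ v, ∑ π, G.μ (p.1, v, π) * ∑ β, if π β = some p.2 then f (v, β) else 0) / G.wU p.1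

/-- Squared norm on functions on `U × Σ`: `‖g‖² = E_u [∑_α g(u,α)²]`. -/
noncomputable def normUsq (g : G.Q1 × G.A → ℝ) : ℝ := ∑ u, G.wU u * ∑ α, (g (u, α)) ^ 2

/-- Squared norm on functions on `V × Σ`: `‖f‖² = E_v [∑_β f(v,β)²]`. -/
noncomputable def normVsq (f : G.Q2 × G.A → ℝ) : ℝ := ∑ v, G.wV v * ∑ β, (f (v, β)) ^ 2

/-- Inner product `⟨g, g'⟩ = E_u [∑_α g(u,α) g'(u,α)]`. -/
noncomputable def inn (g g' : G.Q1 × G.A → ℝ) : ℝ :=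
  ∑ u, G.wU u * ∑ α, g (u, α) * g' (u, α)

/-- An assignment for Bob. -/
def IsBob (f : G.Q2 × G.A → ℝ) : Prop := (∀ p, 0 ≤ f p) ∧ ∀ v, ∑ β, f (v, β) = 1

/-- An assignment for Alice. -/
def IsAlice (g : G.Q1 × G.A → ℝ) : Prop := (∀ p, 0 ≤ g p) ∧ ∀ u, ∑ α, g (u, α) = 1

/-- The value of the game: `val(G) = max ⟨g, Gf⟩` over assignments. -/
noncomputable def val : ℝ :=
  sSup { x | ∃ f g, G.IsBob f ∧ G.IsAlice g ∧ x = G.inn g (G.op f) }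

/-- The collision value `‖G‖ = max_f ‖Gf‖` over assignments `f` for Bob. -/
noncomputable def collVal : ℝ :=
  sSup { x | ∃ f, G.IsBob f ∧ x = Real.sqrt (G.normUsq (G.op f)) }

/-- Product of projection constraints. -/
def tensorC {A A' : Type} (π : A → Option A) (π' : A' → Option A') :
    A × A' → Option (A × A') :=
  fun b => (π b.1).bind fun a => (π' b.2).map fun a' => (a, a')

/-- The product (parallel repetition) of two projection games. -/
noncomputable def tensor (G H : ProjGame) : ProjGame where
  Q1 := G.Q1 × H.Q1
  Q2 := G.Q2 × H.Q2
  A := G.A × H.A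
  μ := fun x =>
    ∑ y : (G.Q1 × G.Q2 × (G.A → Option G.A)) × (H.Q1 × H.Q2 × (H.A → Option H.A)),
      if ((y.1.1, y.2.1), (y.1.2.1, y.2.2.1), tensorC y.1.2.2 y.2.2.2) = x
      then G.μ y.1 * H.μ y.2 else 0
  μ_nonneg := by
    intro x
    refine Finset.sum_nonneg fun y _ => ?_
    split
    · exact mul_nonneg (G.μ_nonneg _) (H.μ_nonneg _)
    · exact le_refl 0
  μ_sum := by
    rw [Finset.sum_comm]
    simp only [Finset.sum_ite_eq, Finset.mem_univ, if_true]
    rw [Fintype.sum_prod_type]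
    calc (∑ y1, ∑ y2, G.μ y1 * H.μ y2)
        = (∑ y1, G.μ y1) * (∑ y2, H.μ y2) := by rw [Finset.sum_mul_sum]
      _ = 1 := by rw [G.μ_sum, H.μ_sum, mul_one]

/-- `G.iterTensor k` is the `(k+1)`-fold parallel repetition `G^{⊗(k+1)}`. -/
noncomputable def iterTensor (G : ProjGame) : ℕ → ProjGame
  | 0 => G
  | n + 1 => G.tensor (G.iterTensor n)

/-- `val₊(G)`: supremum of values of vector assignments. -/
noncomputable def valPlus (G : ProjGame) : ℝ :=
  sSup { x | ∃ n : ℕ, 0 < n ∧ ∃ f : G.Q2 × G.A → Fin n → ℝ,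
    (∀ p i, 0 ≤ f p i) ∧
    (∀ v, Real.sqrt (∑ i, (∑ β, f (v, β) i) ^ 2) ≤ 1) ∧
    x = Real.sqrt (∑ u, G.wU u * ∑ α, ∑ i, (G.op (fun q => f q i) (u, α)) ^ 2) }

/-- `‖Th‖² = E_v [(∑_β h(v,β))²]`. -/
noncomputable def Tnormsq (G : ProjGame) (h : G.Q2 × G.A → ℝ) : ℝ :=
  ∑ v, G.wV v * (∑ β, h (v, β)) ^ 2

/-- `λ₊(G)`: supremum of `‖Gh‖/‖Th‖` over nonnegative `h` with `‖Th‖ > 0`. -/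
noncomputable def lambdaPlus (G : ProjGame) : ℝ :=
  sSup { x | ∃ h : G.Q2 × G.A → ℝ, (∀ p, 0 ≤ h p) ∧
    0 < Real.sqrt (G.Tnormsq h) ∧
    x = Real.sqrt (G.normUsq (G.op h)) / Real.sqrt (G.Tnormsq h) }

/-- The symmetrized distribution on `V × V` (with the constraints marginalized out). -/
noncomputable def msym (G : ProjGame) (v v' : G.Q2) : ℝ :=
  ∑ u, ((∑ π, G.μ (u, v, π)) * (∑ π', G.μ (u, v', π'))) / G.wU u

/-- `G` is `γ`-expanding: the Markov operator of the symmetrized constraint graph has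
spectral gap at least `γ`, i.e. `|⟨x, Ax⟩| ≤ (1-γ) E_v[x(v)²]` for mean-zero `x`. -/
def IsExpanding (G : ProjGame) (γ : ℝ) : Prop :=
  ∀ x : G.Q2 → ℝ, (∑ v, G.wV v * x v) = 0 →
    |∑ v, ∑ v', G.msym v v' * x v * x v'| ≤ (1 - γ) * ∑ v, G.wV v * (x v) ^ 2

/-- The symmetrized distribution on `(v, v', π, π')`. -/
noncomputable def msymFull (G : ProjGame) (v v' : G.Q2) (π π' : G.A → Option G.A) : ℝ :=
  ∑ u, (G.μ (u, v, π) * G.μ (u, v', π')) / G.wU u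

/-- The value of the assignment `x` in the symmetrized game `G_sym`. -/
noncomputable def symValAssign (G : ProjGame) (x : G.Q2 → G.A) : ℝ :=
  ∑ v, ∑ v', ∑ π, ∑ π', G.msymFull v v' π π' *
    (if ∃ α, π (x v) = some α ∧ π' (x v') = some α then 1 else 0)

/-- The value of the symmetrized game `G_sym`. -/
noncomputable def symVal (G : ProjGame) : ℝ :=
  sSup { r | ∃ x : G.Q2 → G.A, r = G.symValAssign x }

end ProjGame

namespace PRB

lemma layer {J : Type*} [Fintype J] (a b x y : J → ℝ) (R : ℝ)
    (hx0 : ∀ j, 0 ≤ x j) (hx1 : ∀ j, x j ≤ 1) (hy0 : ∀ j, 0 ≤ y j) (hy1 : ∀ j, y j ≤ 1)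
    (h : ∀ t : ℝ, 0 ≤ t → ∑ j, (a j * (if t < x j then 1 else 0)
      + b j * (1 - (if t < y j then 1 else 0))) ≤ R) :
    ∑ j, (a j * x j + b j * (1 - y j)) ≤ R := by
  have key : ∀ z : ℝ, 0 ≤ z → z ≤ 1 →
      MeasureTheory.Integrable (fun t : ℝ => if t < z then (1:ℝ) else 0)
        (MeasureTheory.volume.restrict (Set.Ico 0 1)) ∧
      ∫ t in Set.Ico (0:ℝ) 1, (if t < z then (1:ℝ) else 0) = z := by
    intro z hz0 hz1
    have e : (fun t : ℝ => if t < z then (1:ℝ) else 0) = (Set.Iio z).indicator (fun _ => 1) := by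
      ext t; simp [Set.indicator]
    rw [e]
    constructor
    · exact (MeasureTheory.integrable_const _).indicator measurableSet_Iio
    · rw [MeasureTheory.integral_indicator measurableSet_Iio,
        MeasureTheory.Measure.restrict_restrict measurableSet_Iio]
      have : Set.Iio z ∩ Set.Ico 0 1 = Set.Ico 0 z := by
        ext t; simp only [Set.mem_inter_iff, Set.mem_Iio, Set.mem_Ico]
        constructor
        · rintro ⟨h1, h2, h3⟩; exact ⟨h2, h1⟩
        · rintro ⟨h1, h2⟩; exact ⟨h2, h1, lt_of_lt_of_le h2 hz1⟩
      rw [this]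
      simp [hz0]
  have hI : ∀ j, MeasureTheory.Integrable (fun t : ℝ => a j * (if t < x j then (1:ℝ) else 0)
      + b j * (1 - (if t < y j then (1:ℝ) else 0))) (MeasureTheory.volume.restrict (Set.Ico 0 1)) := by
    intro j
    exact ((key _ (hx0 j) (hx1 j)).1.const_mul _).add
      (((MeasureTheory.integrable_const _).sub (key _ (hy0 j) (hy1 j)).1).const_mul _)
  have e1 : ∫ t in Set.Ico (0:ℝ) 1, ∑ j, (a j * (if t < x j then (1:ℝ) else 0)
      + b j * (1 - (if t < y j then (1:ℝ) else 0))) = ∑ j, (a j * x j + b j * (1 - y j)) := by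
    rw [MeasureTheory.integral_finsetSum _ (fun j _ => hI j)]
    refine Finset.sum_congr rfl fun j _ => ?_
    have i1 : MeasureTheory.Integrable (fun t : ℝ => a j * (if t < x j then (1:ℝ) else 0))
        (MeasureTheory.volume.restrict (Set.Ico 0 1)) := (key _ (hx0 j) (hx1 j)).1.const_mul _
    have i2 : MeasureTheory.Integrable (fun t : ℝ => b j * (1 - (if t < y j then (1:ℝ) else 0)))
        (MeasureTheory.volume.restrict (Set.Ico 0 1)) :=
      ((MeasureTheory.integrable_const _).sub (key _ (hy0 j) (hy1 j)).1).const_mul _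
    rw [MeasureTheory.integral_add i1 i2,
      MeasureTheory.integral_const_mul, MeasureTheory.integral_const_mul,
      MeasureTheory.integral_sub (MeasureTheory.integrable_const _) (key _ (hy0 j) (hy1 j)).1,
      (key _ (hx0 j) (hx1 j)).2, (key _ (hy0 j) (hy1 j)).2]
    simp
  rw [← e1]
  calc _ ≤ ∫ t in Set.Ico (0:ℝ) 1, R := by
        refine MeasureTheory.setIntegral_mono_on (MeasureTheory.integrable_finsetSum _ fun j _ => hI j)
          (MeasureTheory.integrable_const _) measurableSet_Ico ?_
        intro t ht
        exact h t ht.1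
    _ = R := by simp

/-- scalar inequality -/
lemma scal (c s : ℝ) (hc : 0 < c) (hc1 : c ≤ 1) (hs : 0 ≤ s) :
    2 * s / (1 + s ^ 2) ≤ (1 - c ^ 2) / (c * (1 + c ^ 2) ^ 2) * s ^ 2
      + c * (1 + 3 * c ^ 2) / (1 + c ^ 2) ^ 2 := by
  have h1 : (0:ℝ) < 1 + s ^ 2 := by positivity
  have h2 : (0:ℝ) < c * (1 + c ^ 2) ^ 2 := by positivity
  have e : (1 - c ^ 2) / (c * (1 + c ^ 2) ^ 2) * s ^ 2
      + c * (1 + 3 * c ^ 2) / (1 + c ^ 2) ^ 2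
      = ((1 - c ^ 2) * s ^ 2 + c ^ 2 * (1 + 3 * c ^ 2)) / (c * (1 + c ^ 2) ^ 2) := by
    field_simp
  rw [e, div_le_div_iff₀ h1 h2]
  have hc2 : 0 ≤ 1 - c ^ 2 := by nlinarith
  have : 0 ≤ (s - c) ^ 2 * ((1 - c ^ 2) * s ^ 2 + 2 * c * (1 - c ^ 2) * s + (1 + 3 * c ^ 2)) := by
    positivity
  nlinarith [this]

lemma pw {ι : Type*} [Fintype ι] (c : ℝ) (hc : 0 < c) (hc1 : c ≤ 1)
    (a b C : ι → ℝ) (hC0 : ∀ i, 0 ≤ C i)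
    (hC1 : ∀ i, C i ≤ 1) (sa : ∑ i, a i ^ 2 ≤ 1) (sb : ∑ i, b i ^ 2 ≤ 1) :
    ∑ i, a i * b i * C i ≤ (1 - c ^ 2) / (c * (1 + c ^ 2) ^ 2) *
      ((∑ i, min (a i ^ 2) (b i ^ 2) * C i) / ∑ i, max (a i ^ 2) (b i ^ 2))
      + c * (1 + 3 * c ^ 2) / (1 + c ^ 2) ^ 2 := by
  set M := ∑ i, min (a i ^ 2) (b i ^ 2) * C i with hM
  set Y := ∑ i, max (a i ^ 2) (b i ^ 2) with hY
  set κ := ∑ i, a i * b i * C i with hκ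
  have hmin0 : ∀ i, 0 ≤ min (a i ^ 2) (b i ^ 2) := fun i => le_min (sq_nonneg _) (sq_nonneg _)
  have hmax0 : ∀ i, 0 ≤ max (a i ^ 2) (b i ^ 2) := fun i => le_max_of_le_left (sq_nonneg _)
  have hM0 : 0 ≤ M := sum_nonneg fun i _ => mul_nonneg (hmin0 i) (hC0 i)
  have hY0 : 0 ≤ Y := sum_nonneg fun i _ => hmax0 i
  have hMY : M + Y ≤ 2 := by
    have : M + Y ≤ ∑ i, (a i ^ 2 + b i ^ 2) := by
      rw [hM, hY, ← sum_add_distrib]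
      refine sum_le_sum fun i _ => ?_
      have := min_add_max (a i ^ 2) (b i ^ 2)
      nlinarith [hmin0 i, hC1 i, hC0 i]
    rw [sum_add_distrib] at this
    linarith
  have hk : κ ^ 2 ≤ M * Y := by
    rw [hκ, hM, hY]
    refine Finset.sum_sq_le_sum_mul_sum_of_sq_le_mul _ (fun i _ => mul_nonneg (hmin0 i) (hC0 i))
      (fun i _ => hmax0 i) ?_
    intro i _
    have e : min (a i ^ 2) (b i ^ 2) * max (a i ^ 2) (b i ^ 2) = a i ^ 2 * b i ^ 2 := min_mul_max _ _
    calc (a i * b i * C i) ^ 2 = (a i ^ 2 * b i ^ 2) * (C i * C i) := by ring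
      _ ≤ (a i ^ 2 * b i ^ 2) * (C i * 1) := by
        have := hC0 i; have := hC1 i; gcongr
      _ = _ := by rw [← e]; ring
  rcases hY0.eq_or_lt with hY' | hY'
  · rw [← hY'] at hk ⊢
    have : κ = 0 := by
      have : κ ^ 2 ≤ 0 := by simpa using hk
      exact pow_eq_zero_iff (two_ne_zero) |>.1 (le_antisymm this (sq_nonneg _))
    rw [this]; simp; positivity
  · set s := Real.sqrt (M / Y) with hs
    have hs0 : 0 ≤ s := Real.sqrt_nonneg _
    have hs2 : s ^ 2 = M / Y := Real.sq_sqrt (by positivity)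
    have hMs : M = s ^ 2 * Y := by rw [hs2]; field_simp
    have h1 : κ ≤ s * Y := by
      apply le_of_sq_le_sq _ (by positivity)
      calc κ ^ 2 ≤ M * Y := hk
        _ = _ := by rw [hMs]; ring
    have h2 : s * Y ≤ 2 * s / (1 + s ^ 2) := by
      rw [le_div_iff₀ (by positivity)]
      rw [hMs] at hMY
      nlinarith
    rw [← hs2]
    exact (h1.trans h2).trans (scal c s hc hc1 hs0)

/-- one rounding step -/
lemma step {V A ι : Type*} [Fintype V] [Fintype A] [Fintype ι]
    (W : V → A → V → A → ℝ) (hW : ∀ v β v' β', 0 ≤ W v β v' β')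
    (F : ι → V → ℝ) (f : ι → V → A → ℝ) (hf0 : ∀ i v β, 0 ≤ f i v β)
    (hf1 : ∀ i v, F i v ≠ 0 → ∑ β, f i v β = 1) (hF1 : ∀ i v, F i v ^ 2 ≤ 1)
    (τ : V → V → ℝ) (hτ : ∀ v v', 0 ≤ τ v v') (R : ℝ)
    (hR : ∀ g : V → A → ℝ, (∀ v β, 0 ≤ g v β) → (∀ v, ∑ β, g v β = 1) →
      ∑ v, ∑ v', τ v v' * ∑ β, ∑ β', W v β v' β' * (g v β * g v' β') ≤ R)
    (g : V → A → ℝ) (hg0 : ∀ v β, 0 ≤ g v β) (hg1 : ∀ v, ∑ β, g v β = 1) (i : ι) :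
    ∑ v, ∑ v', τ v v' * ((∑ β, ∑ β', W v β v' β' * (f i v β * f i v' β'))
        * min (F i v ^ 2) (F i v' ^ 2)
      + (∑ β, ∑ β', W v β v' β' * (g v β * g v' β')) * (1 - max (F i v ^ 2) (F i v' ^ 2))) ≤ R := by
  have := layer (J := V × V)
    (fun p => τ p.1 p.2 * ∑ β, ∑ β', W p.1 β p.2 β' * (f i p.1 β * f i p.2 β'))
    (fun p => τ p.1 p.2 * ∑ β, ∑ β', W p.1 β p.2 β' * (g p.1 β * g p.2 β'))
    (fun p => min (F i p.1 ^ 2) (F i p.2 ^ 2)) (fun p => max (F i p.1 ^ 2) (F i p.2 ^ 2)) R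
    (fun p => le_min (sq_nonneg _) (sq_nonneg _)) (fun p => min_le_of_left_le (hF1 _ _))
    (fun p => le_max_of_le_left (sq_nonneg _)) (fun p => max_le (hF1 _ _) (hF1 _ _)) ?_
  · rw [Fintype.sum_prod_type] at this
    refine le_trans (le_of_eq ?_) this
    refine sum_congr rfl fun v _ => sum_congr rfl fun v' _ => ?_
    ring
  · intro t ht
    have h := hR (fun v β => if t < F i v ^ 2 then f i v β else g v β) ?_ ?_
    · rw [Fintype.sum_prod_type]
      refine le_trans (sum_le_sum fun v _ => sum_le_sum fun v' _ => ?_) h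
      have n1 : 0 ≤ ∑ β, ∑ β', W v β v' β' * (f i v β * g v' β') :=
        sum_nonneg fun β _ => sum_nonneg fun β' _ =>
          mul_nonneg (hW _ _ _ _) (mul_nonneg (hf0 _ _ _) (hg0 _ _))
      have n2 : 0 ≤ ∑ β, ∑ β', W v β v' β' * (g v β * f i v' β') :=
        sum_nonneg fun β _ => sum_nonneg fun β' _ =>
          mul_nonneg (hW _ _ _ _) (mul_nonneg (hg0 _ _) (hf0 _ _ _))
      have n3 := hτ v v'
      simp only [lt_min_iff, lt_max_iff]
      by_cases h1 : t < F i v ^ 2 <;> by_cases h2 : t < F i v' ^ 2 <;> simp [h1, h2] <;> positivity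
    · intro v β
      split
      · exact hf0 _ _ _
      · exact hg0 _ _
    · intro v
      split
      · rename_i h
        apply hf1
        intro h0
        rw [h0] at h
        norm_num at h
        linarith
      · exact hg1 v

lemma iter {V A ι : Type*} [Fintype V] [Fintype A] [Nonempty A] [Fintype ι] [Nonempty ι]
    (W : V → A → V → A → ℝ) (hW : ∀ v β v' β', 0 ≤ W v β v' β')
    (F : ι → V → ℝ) (f : ι → V → A → ℝ) (hf0 : ∀ i v β, 0 ≤ f i v β)
    (hf1 : ∀ i v, F i v ≠ 0 → ∑ β, f i v β = 1) (hF1 : ∀ i v, F i v ^ 2 ≤ 1) (N : ℕ) :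
    ∀ (τ : V → V → ℝ) (_ : ∀ v v', 0 ≤ τ v v') (R : ℝ)
    (_ : ∀ g : V → A → ℝ, (∀ v β, 0 ≤ g v β) → (∀ v, ∑ β, g v β = 1) →
      ∑ v, ∑ v', τ v v' * ∑ β, ∑ β', W v β v' β' * (g v β * g v' β') ≤ R),
    ∑ v, ∑ v', τ v v' * ((∑ j ∈ range N,
        (1 - (∑ i, max (F i v ^ 2) (F i v' ^ 2)) / (Fintype.card ι : ℝ)) ^ j) *
      ((∑ i, (∑ β, ∑ β', W v β v' β' * (f i v β * f i v' β'))
        * min (F i v ^ 2) (F i v' ^ 2)) / (Fintype.card ι : ℝ))) ≤ R := by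
  classical
  have hn : (0:ℝ) < Fintype.card ι := by exact_mod_cast Fintype.card_pos
  have hy : ∀ v v', (∑ i, max (F i v ^ 2) (F i v' ^ 2)) / (Fintype.card ι : ℝ) ≤ 1 := by
    intro v v'
    rw [div_le_one hn]
    calc _ ≤ ∑ i : ι, (1:ℝ) := sum_le_sum fun i _ => max_le (hF1 _ _) (hF1 _ _)
      _ = _ := by simp
  induction N with
  | zero =>
    intro τ hτ R hR
    obtain ⟨a⟩ := ‹Nonempty A›
    have h := hR (fun v β => if β = a then 1 else 0) (fun v β => by positivity) (fun v => by simp)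
    refine le_trans ?_ h
    simp only [range_zero, sum_empty, zero_mul, mul_zero, sum_const_zero]
    refine sum_nonneg fun v _ => sum_nonneg fun v' _ => mul_nonneg (hτ _ _) ?_
    exact sum_nonneg fun β _ => sum_nonneg fun β' _ => mul_nonneg (hW _ _ _ _) (by positivity)
  | succ N ih =>
    intro τ hτ R hR
    have h2 := ih (fun v v' => τ v v' *
        (1 - (∑ i, max (F i v ^ 2) (F i v' ^ 2)) / (Fintype.card ι : ℝ)))
      (fun v v' => mul_nonneg (hτ _ _) (by linarith [hy v v']))
      (R - ∑ v, ∑ v', τ v v' * ((∑ i, (∑ β, ∑ β', W v β v' β' * (f i v β * f i v' β'))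
        * min (F i v ^ 2) (F i v' ^ 2)) / (Fintype.card ι : ℝ))) ?_
    · rw [le_sub_iff_add_le, ← sum_add_distrib] at h2
      refine le_trans (le_of_eq ?_) h2
      refine sum_congr rfl fun v _ => ?_
      rw [← sum_add_distrib]
      refine sum_congr rfl fun v' _ => ?_
      rw [Finset.sum_range_succ', pow_zero]
      simp only [pow_succ]
      rw [← Finset.sum_mul]
      ring
    · intro g hg0 hg1
      have h3 := fun i => step W hW F f hf0 hf1 hF1 τ hτ R hR g hg0 hg1 i
      have h4 : ∑ i : ι, ∑ v, ∑ v', τ v v' * ((∑ β, ∑ β', W v β v' β' * (f i v β * f i v' β'))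
        * min (F i v ^ 2) (F i v' ^ 2)
        + (∑ β, ∑ β', W v β v' β' * (g v β * g v' β')) * (1 - max (F i v ^ 2) (F i v' ^ 2)))
          ≤ Fintype.card ι * R := by
        calc _ ≤ ∑ i : ι, R := sum_le_sum fun i _ => h3 i
          _ = _ := by simp
      rw [mul_comm, ← div_le_iff₀ hn] at h4
      rw [le_sub_iff_add_le, ← sum_add_distrib]
      refine le_trans (le_of_eq ?_) h4
      rw [sum_comm, sum_div]
      refine sum_congr rfl fun v _ => ?_
      rw [← sum_add_distrib, sum_comm, sum_div]
      refine sum_congr rfl fun v' _ => ?_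
      rw [← mul_sum, sum_add_distrib, ← mul_sum, sum_sub_distrib]
      simp
      field_simp
      ring

lemma limit {V A ι : Type*} [Fintype V] [Fintype A] [Nonempty A] [Fintype ι] [Nonempty ι]
    (W : V → A → V → A → ℝ) (hW : ∀ v β v' β', 0 ≤ W v β v' β')
    (F : ι → V → ℝ) (f : ι → V → A → ℝ) (hf0 : ∀ i v β, 0 ≤ f i v β)
    (hf1 : ∀ i v, F i v ≠ 0 → ∑ β, f i v β = 1) (hF1 : ∀ i v, F i v ^ 2 ≤ 1) (R : ℝ)
    (hR : ∀ g : V → A → ℝ, (∀ v β, 0 ≤ g v β) → (∀ v, ∑ β, g v β = 1) →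
      ∑ v, ∑ v', ∑ β, ∑ β', W v β v' β' * (g v β * g v' β') ≤ R) :
    ∑ v, ∑ v', (∑ i, (∑ β, ∑ β', W v β v' β' * (f i v β * f i v' β'))
        * min (F i v ^ 2) (F i v' ^ 2)) / (∑ i, max (F i v ^ 2) (F i v' ^ 2)) ≤ R := by
  have h := fun N => iter W hW F f hf0 hf1 hF1 N (fun _ _ => 1) (fun _ _ => zero_le_one) R
    (by simpa using hR)
  have hn : (0:ℝ) < Fintype.card ι := by exact_mod_cast Fintype.card_pos
  refine le_of_tendsto' (x := Filter.atTop) (tendsto_finsetSum _ fun v _ => tendsto_finsetSum _ fun v' _ => ?_) h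
  simp only [one_mul]
  have hmax0 : ∀ i, 0 ≤ max (F i v ^ 2) (F i v' ^ 2) := fun i => le_max_of_le_left (sq_nonneg _)
  have hY0 : 0 ≤ ∑ i, max (F i v ^ 2) (F i v' ^ 2) := sum_nonneg fun i _ => hmax0 i
  have hY1 : (∑ i, max (F i v ^ 2) (F i v' ^ 2)) / (Fintype.card ι : ℝ) ≤ 1 := by
    rw [div_le_one hn]
    calc _ ≤ ∑ i : ι, (1:ℝ) := sum_le_sum fun i _ => max_le (hF1 _ _) (hF1 _ _)
      _ = _ := by simp
  rcases hY0.eq_or_lt with hY | hY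
  · have h0 : ∀ i, max (F i v ^ 2) (F i v' ^ 2) = 0 := by
      intro i
      exact (sum_eq_zero_iff_of_nonneg (fun i _ => hmax0 i)).1 hY.symm i (mem_univ _)
    have h1 : ∀ i, min (F i v ^ 2) (F i v' ^ 2) = 0 := by
      intro i
      exact le_antisymm ((min_le_max).trans (h0 i).le) (le_min (sq_nonneg _) (sq_nonneg _))
    simp [h1]
  · set Y := ∑ i, max (F i v ^ 2) (F i v' ^ 2)
    have h1 : 0 < Y / (Fintype.card ι : ℝ) := by positivity
    have h2 := (hasSum_geometric_of_lt_one (r := 1 - Y / (Fintype.card ι : ℝ)) (by linarith)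
      (by linarith)).tendsto_sum_nat
    have h3 := h2.mul_const ((∑ i, (∑ β, ∑ β', W v β v' β' * (f i v β * f i v' β'))
        * min (F i v ^ 2) (F i v' ^ 2)) / (Fintype.card ι : ℝ))
    convert h3 using 2
    rw [sub_sub_cancel, inv_div, div_mul_div_comm, mul_comm Y, mul_div_mul_left _ _ hn.ne']

/-- vector assignments are bounded -/
lemma vec {V A ι : Type*} [Fintype V] [Fintype A] [Nonempty A] [Fintype ι]
    (W : V → A → V → A → ℝ) (hW : ∀ v β v' β', 0 ≤ W v β v' β')
    (m : V → V → ℝ) (hWm : ∀ v β v' β', W v β v' β' ≤ m v v') (hm : ∑ v, ∑ v', m v v' ≤ 1)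
    (c : ℝ) (hc : 0 < c) (hc1 : c ≤ 1)
    (hR : ∀ g : V → A → ℝ, (∀ v β, 0 ≤ g v β) → (∀ v, ∑ β, g v β = 1) →
      ∑ v, ∑ v', ∑ β, ∑ β', W v β v' β' * (g v β * g v' β') ≤ c ^ 2)
    (f : ι → V → A → ℝ) (hf0 : ∀ i v β, 0 ≤ f i v β)
    (hf1 : ∀ v, ∑ i, (∑ β, f i v β) ^ 2 ≤ 1) :
    ∑ v, ∑ v', ∑ i, ∑ β, ∑ β', W v β v' β' * (f i v β * f i v' β') ≤ 2 * c / (1 + c ^ 2) := by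
  rcases isEmpty_or_nonempty ι with he | he
  · simp; positivity
  set F : ι → V → ℝ := fun i v => ∑ β, f i v β with hF
  have hF0 : ∀ i v, 0 ≤ F i v := fun i v => sum_nonneg fun β _ => hf0 i v β
  set n : ι → V → A → ℝ := fun i v β => f i v β / F i v with hn
  have hn0 : ∀ i v β, 0 ≤ n i v β := fun i v β => div_nonneg (hf0 _ _ _) (hF0 _ _)
  have hn1 : ∀ i v, F i v ≠ 0 → ∑ β, n i v β = 1 := by
    intro i v h
    rw [hn]; dsimp only
    rw [← sum_div]; exact div_self h
  have hnle : ∀ i v, ∑ β, n i v β ≤ 1 := by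
    intro i v
    by_cases h : F i v = 0
    · simp [hn, h]
    · exact (hn1 i v h).le
  have hfn : ∀ i v β, f i v β = F i v * n i v β := by
    intro i v β
    by_cases h : F i v = 0
    · rw [h, zero_mul]
      exact (sum_eq_zero_iff_of_nonneg (fun β _ => hf0 i v β)).1 h β (mem_univ _)
    · rw [hn]; field_simp
  have hF1 : ∀ i v, F i v ^ 2 ≤ 1 := fun i v =>
    (single_le_sum (f := fun i => F i v ^ 2) (fun i _ => sq_nonneg _) (mem_univ i)).trans (hf1 v)
  have hlim := limit W hW F n hn0 hn1 hF1 (c ^ 2) hR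
  set A' := (1 - c ^ 2) / (c * (1 + c ^ 2) ^ 2) with hA'
  set B' := c * (1 + 3 * c ^ 2) / (1 + c ^ 2) ^ 2 with hB'
  have hA0 : 0 ≤ A' := div_nonneg (by nlinarith) (by positivity)
  have hB0 : 0 ≤ B' := by positivity
  have hpt : ∀ v v', ∑ i, ∑ β, ∑ β', W v β v' β' * (f i v β * f i v' β') ≤
      A' * ((∑ i, (∑ β, ∑ β', W v β v' β' * (n i v β * n i v' β'))
        * min (F i v ^ 2) (F i v' ^ 2)) / (∑ i, max (F i v ^ 2) (F i v' ^ 2))) + B' * m v v' := by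
    intro v v'
    set K : ι → ℝ := fun i => ∑ β, ∑ β', W v β v' β' * (n i v β * n i v' β') with hK
    have hm0 : 0 ≤ m v v' := by
      obtain ⟨a⟩ := ‹Nonempty A›
      exact (hW v a v' a).trans (hWm v a v' a)
    have hK0 : ∀ i, 0 ≤ K i := fun i => sum_nonneg fun β _ => sum_nonneg fun β' _ =>
      mul_nonneg (hW _ _ _ _) (mul_nonneg (hn0 _ _ _) (hn0 _ _ _))
    have hKm : ∀ i, K i ≤ m v v' := by
      intro i
      calc K i ≤ ∑ β, ∑ β', m v v' * (n i v β * n i v' β') :=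
            sum_le_sum fun β _ => sum_le_sum fun β' _ =>
              mul_le_mul_of_nonneg_right (hWm _ _ _ _) (mul_nonneg (hn0 _ _ _) (hn0 _ _ _))
        _ = m v v' * ((∑ β, n i v β) * (∑ β', n i v' β')) := by
            rw [sum_mul_sum]; simp only [mul_sum]
        _ ≤ m v v' * (1 * 1) := by
            refine mul_le_mul_of_nonneg_left (mul_le_mul (hnle _ _) (hnle _ _)
              (sum_nonneg fun β _ => hn0 _ _ _) zero_le_one) hm0
        _ = _ := by ring
    have e : ∑ i, ∑ β, ∑ β', W v β v' β' * (f i v β * f i v' β') = ∑ i, F i v * F i v' * K i := by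
      refine sum_congr rfl fun i _ => ?_
      rw [hK]; dsimp only
      simp only [mul_sum]
      refine sum_congr rfl fun β _ => sum_congr rfl fun β' _ => ?_
      rw [hfn i v β, hfn i v' β']; ring
    rw [e]
    change _ ≤ A' * ((∑ i, K i * min (F i v ^ 2) (F i v' ^ 2)) / _) + _
    rcases hm0.eq_or_lt with h0 | h0
    · have : ∀ i, K i = 0 := fun i => le_antisymm ((hKm i).trans h0.symm.le) (hK0 i)
      simp [this, ← h0]
    · have := pw c hc hc1 (fun i => F i v) (fun i => F i v') (fun i => K i / m v v')
        (fun i => div_nonneg (hK0 i) hm0) (fun i => (div_le_one h0).2 (hKm i)) (hf1 v) (hf1 v')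
      have h5 := mul_le_mul_of_nonneg_left this hm0
      refine le_trans (le_of_eq ?_) (h5.trans (le_of_eq ?_))
      · rw [mul_sum]
        refine sum_congr rfl fun i _ => ?_
        field_simp
      · have e2 : ∑ i, min (F i v ^ 2) (F i v' ^ 2) * (K i / m v v')
            = (∑ i, K i * min (F i v ^ 2) (F i v' ^ 2)) / m v v' := by
          rw [sum_div]
          refine sum_congr rfl fun i _ => ?_
          ring
        simp only [e2]
        rw [mul_add]
        congr 1
        · rw [← hA']
          generalize (∑ i, max (F i v ^ 2) (F i v' ^ 2)) = Y
          generalize (∑ i, K i * min (F i v ^ 2) (F i v' ^ 2)) = X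
          rw [show m v v' * (A' * (X / m v v' / Y)) = (m v v' / m v v') * (A' * (X / Y)) by ring,
            div_self h0.ne', one_mul]
        · rw [mul_comm]
  calc _ ≤ ∑ v, ∑ v', (A' * ((∑ i, (∑ β, ∑ β', W v β v' β' * (n i v β * n i v' β'))
        * min (F i v ^ 2) (F i v' ^ 2)) / (∑ i, max (F i v ^ 2) (F i v' ^ 2))) + B' * m v v') :=
        sum_le_sum fun v _ => sum_le_sum fun v' _ => hpt v v'
    _ = A' * (∑ v, ∑ v', (∑ i, (∑ β, ∑ β', W v β v' β' * (n i v β * n i v' β'))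
        * min (F i v ^ 2) (F i v' ^ 2)) / (∑ i, max (F i v ^ 2) (F i v' ^ 2)))
        + B' * ∑ v, ∑ v', m v v' := by
        simp only [sum_add_distrib, mul_sum]
    _ ≤ A' * c ^ 2 + B' * 1 := by gcongr
    _ = _ := by
        rw [hA', hB']; field_simp; ring

end PRB

namespace PRB

open ProjGame

/-- constraint kernel -/
noncomputable def ker (G : ProjGame) (u : G.Q1) (v : G.Q2) (α β : G.A) : ℝ :=
  ∑ π, G.μ (u, v, π) * (if π β = some α then 1 else 0)

noncomputable def qq (G : ProjGame) (u : G.Q1) (v : G.Q2) : ℝ := ∑ π, G.μ (u, v, π)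

noncomputable def WW (G : ProjGame) (v : G.Q2) (β : G.A) (v' : G.Q2) (β' : G.A) : ℝ :=
  ∑ u, (∑ α, ker G u v α β * ker G u v' α β') / G.wU u

lemma ker_nonneg (G : ProjGame) (u v α β) : 0 ≤ ker G u v α β :=
  sum_nonneg fun π _ => mul_nonneg (G.μ_nonneg _) (by positivity)

lemma qq_nonneg (G : ProjGame) (u v) : 0 ≤ qq G u v := sum_nonneg fun π _ => G.μ_nonneg _

lemma wU_eq (G : ProjGame) (u) : G.wU u = ∑ v, qq G u v := rfl

lemma wU_nonneg (G : ProjGame) (u) : 0 ≤ G.wU u := sum_nonneg fun v _ => qq_nonneg G u v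

lemma wU_sum (G : ProjGame) : ∑ u, G.wU u = 1 := by
  rw [← G.μ_sum, Fintype.sum_prod_type]
  refine sum_congr rfl fun u _ => ?_
  rw [Fintype.sum_prod_type]; rfl

lemma ker_le (G : ProjGame) (u v α β) : ker G u v α β ≤ qq G u v := by
  refine sum_le_sum fun π _ => ?_
  have := G.μ_nonneg (u, v, π)
  split <;> simp [this]

lemma ker_sum_le (G : ProjGame) (u v β) : ∑ α, ker G u v α β ≤ qq G u v := by
  unfold ker qq
  rw [sum_comm]
  refine sum_le_sum fun π _ => ?_
  rw [← mul_sum]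
  have h0 := G.μ_nonneg (u, v, π)
  have : ∑ α, (if π β = some α then (1:ℝ) else 0) ≤ 1 := by
    cases h : π β with
    | none => simp
    | some a => simp
  nlinarith

lemma op_eq (G : ProjGame) (f : G.Q2 × G.A → ℝ) (u α) :
    G.op f (u, α) = (∑ v, ∑ β, ker G u v α β * f (v, β)) / G.wU u := by
  unfold ProjGame.op ker
  congr 1
  refine sum_congr rfl fun v _ => ?_
  simp only [sum_mul, mul_sum]
  rw [sum_comm]
  refine sum_congr rfl fun β _ => sum_congr rfl fun π _ => ?_
  split <;> simp

lemma op_nonneg (G : ProjGame) (f : G.Q2 × G.A → ℝ) (hf : ∀ p, 0 ≤ f p) (p) : 0 ≤ G.op f p := by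
  obtain ⟨u, α⟩ := p
  rw [op_eq]
  exact div_nonneg (sum_nonneg fun v _ => sum_nonneg fun β _ =>
    mul_nonneg (ker_nonneg _ _ _ _ _) (hf _)) (wU_nonneg _ _)

lemma op_sum_le (G : ProjGame) (f : G.Q2 × G.A → ℝ) (hf : G.IsBob f) (u) :
    ∑ α, G.op f (u, α) ≤ 1 := by
  simp only [op_eq]
  rw [← sum_div]
  refine div_le_one_of_le₀ ?_ (wU_nonneg _ _)
  rw [sum_comm, wU_eq]
  refine sum_le_sum fun v _ => ?_
  rw [sum_comm]
  calc _ = ∑ β, (∑ α, ker G u v α β) * f (v, β) := by simp only [sum_mul]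
    _ ≤ ∑ β, qq G u v * f (v, β) := sum_le_sum fun β _ =>
        mul_le_mul_of_nonneg_right (ker_sum_le _ _ _ _) (hf.1 _)
    _ = _ := by rw [← mul_sum, hf.2, mul_one]

lemma norm_eq (G : ProjGame) (f : G.Q2 × G.A → ℝ) :
    G.normUsq (G.op f) =
      ∑ v, ∑ v', ∑ β, ∑ β', WW G v β v' β' * (f (v, β) * f (v', β')) := by
  have h1 : ∀ u, G.wU u * ∑ α, (G.op f (u, α)) ^ 2
      = ∑ α, ∑ v, ∑ v', ∑ β, ∑ β', ker G u v α β * ker G u v' α β' / G.wU u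
        * (f (v, β) * f (v', β')) := by
    intro u
    rw [mul_sum]
    refine sum_congr rfl fun α _ => ?_
    rw [op_eq]
    have : ∀ X : ℝ, G.wU u * (X / G.wU u) ^ 2 = X * X / G.wU u := by
      intro X
      by_cases h : G.wU u = 0
      · simp [h]
      · field_simp
    rw [this, sum_mul_sum, sum_div]
    refine sum_congr rfl fun v _ => ?_
    rw [sum_div]
    refine sum_congr rfl fun v' _ => ?_
    rw [sum_mul_sum, sum_div]
    refine sum_congr rfl fun β _ => ?_
    rw [sum_div]
    refine sum_congr rfl fun β' _ => ?_
    ring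
  unfold ProjGame.normUsq WW
  simp only [h1, sum_div, sum_mul]
  simp only [← Fintype.sum_prod_type' (f := fun (u : G.Q1) (α : G.A) => _)]
  rw [sum_comm]
  refine sum_congr rfl fun v _ => ?_
  rw [sum_comm]
  refine sum_congr rfl fun v' _ => ?_
  rw [sum_comm]
  refine sum_congr rfl fun β _ => ?_
  rw [sum_comm]

lemma WW_nonneg (G : ProjGame) (v β v' β') : 0 ≤ WW G v β v' β' :=
  sum_nonneg fun u _ => div_nonneg (sum_nonneg fun α _ =>
    mul_nonneg (ker_nonneg _ _ _ _ _) (ker_nonneg _ _ _ _ _)) (wU_nonneg _ _)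

lemma WW_le (G : ProjGame) (v β v' β') :
    WW G v β v' β' ≤ ∑ u, qq G u v * qq G u v' / G.wU u := by
  refine sum_le_sum fun u _ => div_le_div_of_nonneg_right ?_ (wU_nonneg _ _)
  calc _ ≤ ∑ α, ker G u v α β * qq G u v' := sum_le_sum fun α _ =>
        mul_le_mul_of_nonneg_left (ker_le _ _ _ _ _) (ker_nonneg _ _ _ _ _)
    _ = (∑ α, ker G u v α β) * qq G u v' := by rw [sum_mul]
    _ ≤ _ := mul_le_mul_of_nonneg_right (ker_sum_le _ _ _ _) (qq_nonneg _ _ _)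

lemma m_sum (G : ProjGame) : ∑ v, ∑ v', ∑ u, qq G u v * qq G u v' / G.wU u ≤ 1 := by
  rw [← wU_sum G]
  have : ∑ v, ∑ v', ∑ u, qq G u v * qq G u v' / G.wU u
      = ∑ u, ∑ v, ∑ v', qq G u v * qq G u v' / G.wU u := by
    rw [sum_comm]
    simp only [← Fintype.sum_prod_type' (f := fun (v : G.Q2) (v' : G.Q2) => _)]
    rw [sum_comm]
    simp only [Fintype.sum_prod_type]
    refine sum_congr rfl fun u _ => ?_
    rw [sum_comm]
  rw [this]
  refine sum_le_sum fun u _ => ?_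
  have e : ∑ v, ∑ v', qq G u v * qq G u v' / G.wU u = G.wU u * G.wU u / G.wU u := by
    simp only [← sum_div]
    rw [← sum_mul_sum, ← wU_eq]
  rw [e]
  by_cases h : G.wU u = 0
  · simp [h]
  · rw [mul_div_assoc, div_self h, mul_one]

lemma inn_sq_le (G : ProjGame) (f g) (hg : G.IsAlice g) :
    G.inn g (G.op f) ^ 2 ≤ G.normUsq (G.op f) := by
  unfold ProjGame.inn ProjGame.normUsq
  simp only [mul_sum]
  simp only [← Fintype.sum_prod_type' (f := fun (u : G.Q1) (α : G.A) => _)]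
  have h := Finset.sum_sq_le_sum_mul_sum_of_sq_le_mul (univ : Finset (G.Q1 × G.A))
    (r := fun p => G.wU p.1 * (g (p.1, p.2) * G.op f (p.1, p.2)))
    (f := fun p => G.wU p.1 * (g (p.1, p.2)) ^ 2) (g := fun p => G.wU p.1 * (G.op f (p.1, p.2)) ^ 2)
    (fun p _ => mul_nonneg (wU_nonneg _ _) (sq_nonneg _))
    (fun p _ => mul_nonneg (wU_nonneg _ _) (sq_nonneg _)) (fun p _ => by apply le_of_eq; ring)
  refine h.trans ?_
  have h1 : ∑ p : G.Q1 × G.A, G.wU p.1 * (g (p.1, p.2)) ^ 2 ≤ 1 := by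
    rw [← wU_sum G, Fintype.sum_prod_type]
    refine sum_le_sum fun u _ => ?_
    dsimp only
    rw [← mul_sum]
    refine mul_le_of_le_one_right (wU_nonneg _ _) ?_
    rw [← hg.2 u]
    refine sum_le_sum fun α _ => ?_
    have h0 := hg.1 (u, α)
    have h1 : g (u, α) ≤ 1 := by
      rw [← hg.2 u]
      exact single_le_sum (f := fun α => g (u, α)) (fun α _ => hg.1 _) (mem_univ α)
    nlinarith
  refine mul_le_of_le_one_left ?_ h1
  exact sum_nonneg fun p _ => mul_nonneg (wU_nonneg _ _) (sq_nonneg _)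

lemma norm_le_one (G : ProjGame) (f) (hf : G.IsBob f) : G.normUsq (G.op f) ≤ 1 := by
  rw [← wU_sum G]
  refine sum_le_sum fun u _ => ?_
  refine mul_le_of_le_one_right (wU_nonneg _ _) ((sum_le_sum fun α _ => ?_).trans (op_sum_le G f hf u))
  have h0 := op_nonneg G f hf.1 (u, α)
  have h1 : G.op f (u, α) ≤ 1 :=
    (single_le_sum (f := fun α => G.op f (u, α)) (fun α _ => op_nonneg G f hf.1 _)
      (mem_univ α)).trans (op_sum_le G f hf u)
  nlinarith

lemma norm_le_val (G : ProjGame) (f) (hf : G.IsBob f) : G.normUsq (G.op f) ≤ G.val := by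
  obtain ⟨a⟩ := G.neA
  set g : G.Q1 × G.A → ℝ := fun p => G.op f p +
    (if p.2 = a then 1 - ∑ α, G.op f (p.1, α) else 0) with hgdef
  have hle : ∀ p, G.op f p ≤ g p := by
    intro p
    have := op_sum_le G f hf p.1
    simp only [hgdef]
    split <;> linarith
  have hg : G.IsAlice g := by
    refine ⟨fun p => (op_nonneg G f hf.1 p).trans (hle p), fun u => ?_⟩
    simp only [hgdef, sum_add_distrib]
    simp
  have h1 : G.inn g (G.op f) ≤ G.val := by
    refine le_csSup ⟨1, ?_⟩ ⟨f, g, hf, hg, rfl⟩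
    rintro x ⟨f', g', hf', hg', rfl⟩
    have := (inn_sq_le G f' g' hg').trans (norm_le_one G f' hf')
    nlinarith
  refine le_trans ?_ h1
  refine sum_le_sum fun u _ => mul_le_mul_of_nonneg_left (sum_le_sum fun α _ => ?_) (wU_nonneg _ _)
  rw [sq]
  exact mul_le_mul_of_nonneg_right (hle _) (op_nonneg G f hf.1 _)

lemma val_le (G : ProjGame) (D : ℝ) (h : ∀ f, G.IsBob f → G.normUsq (G.op f) ≤ D) :
    G.val ≤ Real.sqrt D := by
  refine Real.sSup_le ?_ (Real.sqrt_nonneg _)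
  rintro x ⟨f, g, hf, hg, rfl⟩
  exact Real.le_sqrt_of_sq_le ((inn_sq_le G f g hg).trans (h f hf))

lemma vecGame (G : ProjGame) (ρ : ℝ) (hρ0 : 0 < ρ) (hρ1 : ρ ≤ 1) (hval : G.val ≤ ρ)
    {ι : Type*} [Fintype ι] (f : ι → G.Q2 × G.A → ℝ) (hf0 : ∀ i p, 0 ≤ f i p)
    (hf1 : ∀ v, ∑ i, (∑ β, f i (v, β)) ^ 2 ≤ 1) :
    ∑ i, G.normUsq (G.op (f i)) ≤ 2 * Real.sqrt ρ / (1 + ρ) := by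
  have hs : Real.sqrt ρ ^ 2 = ρ := Real.sq_sqrt hρ0.le
  have h := vec (WW G) (WW_nonneg G) (fun v v' => ∑ u, qq G u v * qq G u v' / G.wU u)
    (WW_le G) (m_sum G) (Real.sqrt ρ) (Real.sqrt_pos.2 hρ0) (Real.sqrt_le_one.2 hρ1) ?_
    (fun i v β => f i (v, β)) (fun i v β => hf0 _ _) hf1
  · rw [hs] at h
    refine le_trans (le_of_eq ?_) h
    simp only [norm_eq]
    rw [sum_comm]
    refine sum_congr rfl fun v _ => ?_
    rw [sum_comm]
  · intro g hg0 hg1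
    rw [hs]
    have := (norm_le_val G (fun p => g p.1 p.2) ⟨fun p => hg0 _ _, hg1⟩).trans hval
    rwa [norm_eq] at this

lemma tens_sum (G H : ProjGame) (u : G.Q1) (u' : H.Q1) (v : G.Q2) (v' : H.Q2)
    (X : (G.A × H.A → Option (G.A × H.A)) → ℝ) :
    ∑ π : G.A × H.A → Option (G.A × H.A), (G.tensor H).μ ((u, u'), (v, v'), π) * X π
      = ∑ p, ∑ p', G.μ (u, v, p) * H.μ (u', v', p') * X (tensorC p p') := by
  simp only [ProjGame.tensor, sum_mul]
  rw [sum_comm]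
  have : ∀ y : (G.Q1 × G.Q2 × (G.A → Option G.A)) × (H.Q1 × H.Q2 × (H.A → Option H.A)),
      ∑ π, (if ((y.1.1, y.2.1), (y.1.2.1, y.2.2.1), tensorC y.1.2.2 y.2.2.2) = ((u, u'), (v, v'), π)
        then G.μ y.1 * H.μ y.2 else 0) * X π
      = if y.1.1 = u then if y.1.2.1 = v then if y.2.1 = u' then if y.2.2.1 = v' then
          G.μ y.1 * H.μ y.2 * X (tensorC y.1.2.2 y.2.2.2) else 0 else 0 else 0 else 0 := by
    intro y
    by_cases h1 : y.1.1 = u <;> by_cases h2 : y.2.1 = u' <;> by_cases h3 : y.1.2.1 = v <;>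
      by_cases h4 : y.2.2.1 = v' <;> simp [Prod.ext_iff, h1, h2, h3, h4]
  rw [sum_congr rfl fun y _ => this y]
  simp only [Fintype.sum_prod_type]
  simp [Finset.sum_ite_eq]

lemma tensorC_iff {A A' : Type} (π : A → Option A) (π' : A' → Option A') (β β' α α') :
    tensorC π π' (β, β') = some (α, α') ↔ π β = some α ∧ π' β' = some α' := by
  unfold tensorC
  cases π β <;> cases π' β' <;> simp

lemma ker_tensor (G H : ProjGame) (u : G.Q1) (u' : H.Q1) (v : G.Q2) (v' : H.Q2)
    (α β : G.A) (α' β' : H.A) :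
    ker (G.tensor H) (u, u') (v, v') (α, α') (β, β') = ker G u v α β * ker H u' v' α' β' := by
  refine (tens_sum G H u u' v v' (fun π => if π (β, β') = some (α, α') then 1 else 0)).trans ?_
  unfold ker
  rw [sum_mul_sum]
  refine sum_congr rfl fun p _ => sum_congr rfl fun p' _ => ?_
  simp only [tensorC_iff]
  by_cases h1 : p β = some α <;> by_cases h2 : p' β' = some α' <;> simp [h1, h2]

lemma wU_tensor (G H : ProjGame) (u : G.Q1) (u' : H.Q1) :
    (G.tensor H).wU (u, u') = G.wU u * H.wU u' := by
  have h : ∀ v v', qq (G.tensor H) (u, u') (v, v') = qq G u v * qq H u' v' := by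
    intro v v'
    have := tens_sum G H u u' v v' (fun _ => 1)
    simp only [mul_one] at this
    refine this.trans ?_
    unfold qq
    rw [sum_mul_sum]
  rw [wU_eq G, wU_eq H, sum_mul_sum]
  refine (Fintype.sum_prod_type (fun p : G.Q2 × H.Q2 => qq (G.tensor H) (u, u') p)).trans ?_
  exact sum_congr rfl fun v _ => sum_congr rfl fun v' _ => h v v'

lemma op_tensor (G H : ProjGame) (f : (G.Q2 × H.Q2) × (G.A × H.A) → ℝ)
    (u : G.Q1) (u' : H.Q1) (α : G.A) (α' : H.A) :
    (G.tensor H).op f ((u, u'), (α, α'))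
      = G.op (fun p => H.op (fun q => f ((p.1, q.1), (p.2, q.2))) (u', α')) (u, α) := by
  refine (op_eq (G.tensor H) f (u, u') (α, α')).trans ?_
  rw [op_eq, wU_tensor]
  have e : ∑ v : G.Q2 × H.Q2, ∑ β : G.A × H.A,
      ker (G.tensor H) (u, u') v (α, α') β * f (v, β) =
      ∑ v, ∑ β, ker G u v α β * ∑ v', ∑ β', ker H u' v' α' β' * f ((v, v'), (β, β')) := by
    simp only [Fintype.sum_prod_type]
    refine sum_congr rfl fun v _ => ?_
    rw [sum_comm]
    refine sum_congr rfl fun β _ => ?_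
    rw [mul_sum]
    refine sum_congr rfl fun v' _ => ?_
    rw [mul_sum]
    refine sum_congr rfl fun β' _ => ?_
    rw [ker_tensor]; ring
  refine (congrArg (fun x => x / (G.wU u * H.wU u')) e).trans ?_
  simp only [op_eq]
  rw [mul_comm, ← div_div, sum_div]
  congr 1
  refine sum_congr rfl fun v _ => ?_
  rw [sum_div]
  refine sum_congr rfl fun β _ => ?_
  rw [mul_div_assoc]

lemma op_sum (G : ProjGame) {ι : Type*} [Fintype ι] (f : ι → G.Q2 × G.A → ℝ) (p) :
    G.op (fun q => ∑ i, f i q) p = ∑ i, G.op (f i) p := by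
  obtain ⟨u, α⟩ := p
  simp only [op_eq]
  rw [← sum_div, sum_comm (s := (univ : Finset ι))]
  congr 1
  refine sum_congr rfl fun v _ => ?_
  rw [sum_comm (s := (univ : Finset ι))]
  refine sum_congr rfl fun β _ => ?_
  rw [mul_sum]

lemma op_smul (G : ProjGame) (c : ℝ) (f : G.Q2 × G.A → ℝ) (p) :
    G.op (fun q => c * f q) p = c * G.op f p := by
  obtain ⟨u, α⟩ := p
  simp only [op_eq]
  rw [← mul_div_assoc, mul_sum]
  congr 1
  refine sum_congr rfl fun v _ => ?_
  rw [mul_sum]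
  exact sum_congr rfl fun β _ => by ring

lemma norm_smul (G : ProjGame) (c : ℝ) (f : G.Q2 × G.A → ℝ) :
    G.normUsq (G.op (fun q => c * f q)) = c ^ 2 * G.normUsq (G.op f) := by
  unfold ProjGame.normUsq
  simp only [op_smul, mul_sum]
  exact sum_congr rfl fun u _ => sum_congr rfl fun α _ => by ring

lemma tensor_bound (G H : ProjGame) (ρ : ℝ) (hρ0 : 0 < ρ) (hρ1 : ρ ≤ 1) (hval : G.val ≤ ρ)
    (D : ℝ) (hD : 0 < D) (hH : ∀ f, H.IsBob f → H.normUsq (H.op f) ≤ D)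
    (f : (G.Q2 × H.Q2) × (G.A × H.A) → ℝ) (hf : (G.tensor H).IsBob f) :
    (G.tensor H).normUsq ((G.tensor H).op f) ≤ 2 * Real.sqrt ρ / (1 + ρ) * D := by
  have hf0 : ∀ p, 0 ≤ f p := hf.1
  have hf1 : ∀ v : G.Q2 × H.Q2, ∑ β : G.A × H.A, f (v, β) = 1 := hf.2
  set F : H.Q1 × H.A → G.Q2 × G.A → ℝ :=
    fun i p => H.op (fun q => f ((p.1, q.1), (p.2, q.2))) i with hF
  have h := vecGame G ρ hρ0 hρ1 hval
    (fun (i : H.Q1 × H.A) p => Real.sqrt (H.wU i.1 / D) * F i p)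
    (fun i p => mul_nonneg (Real.sqrt_nonneg _) (op_nonneg H _ (fun q => hf0 _) _)) ?_
  · rw [← div_le_iff₀ hD]
    refine le_trans (le_of_eq ?_) h
    simp only [norm_smul]
    have e : (G.tensor H).normUsq ((G.tensor H).op f) =
        ∑ u : G.Q1 × H.Q1, (G.tensor H).wU u * ∑ α : G.A × H.A, (G.tensor H).op f (u, α) ^ 2 := rfl
    rw [e]
    simp only [Fintype.sum_prod_type, wU_tensor, op_tensor]
    rw [sum_comm, sum_div]
    refine sum_congr rfl fun u' _ => ?_
    have hsq : Real.sqrt (H.wU u' / D) ^ 2 = H.wU u' / D :=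
      Real.sq_sqrt (div_nonneg (wU_nonneg _ _) hD.le)
    simp only [hsq, ProjGame.normUsq]
    rw [← mul_sum, sum_comm (s := (univ : Finset H.A)), sum_div, mul_sum]
    refine sum_congr rfl fun u _ => ?_
    rw [← mul_sum, sum_comm (s := (univ : Finset H.A))]
    ring
  · intro v
    have hb : H.IsBob (fun q => ∑ β, f ((v, q.1), (β, q.2))) := by
      refine ⟨fun q => sum_nonneg fun β _ => hf0 _, fun v' => ?_⟩
      rw [sum_comm, ← hf1 (v, v'), Fintype.sum_prod_type]
    have h2 := hH _ hb
    have e : ∑ i : H.Q1 × H.A, (∑ β, Real.sqrt (H.wU i.1 / D) * F i (v, β)) ^ 2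
        = H.normUsq (H.op (fun q => ∑ β, f ((v, q.1), (β, q.2)))) / D := by
      rw [Fintype.sum_prod_type]
      unfold ProjGame.normUsq
      rw [sum_div]
      refine sum_congr rfl fun u' _ => ?_
      rw [mul_div_right_comm, mul_sum]
      refine sum_congr rfl fun α' _ => ?_
      rw [← mul_sum, mul_pow, Real.sq_sqrt (div_nonneg (wU_nonneg _ _) hD.le)]
      congr 2
      exact (op_sum H (fun β q => f ((v, q.1), (β, q.2))) (u', α')).symm
    rw [e]
    exact (div_le_one hD).2 h2

lemma iter_bound (G : ProjGame) (ρ : ℝ) (hρ0 : 0 < ρ) (hρ1 : ρ ≤ 1) (hval : G.val ≤ ρ) (n : ℕ) :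
    ∀ f, (G.iterTensor n).IsBob f → (G.iterTensor n).normUsq ((G.iterTensor n).op f)
      ≤ (2 * Real.sqrt ρ / (1 + ρ)) ^ (n + 1) := by
  induction n with
  | zero =>
    intro f hf
    have h := vecGame G ρ hρ0 hρ1 hval (fun (_ : Unit) => f) (fun _ => hf.1)
      (fun v => by
        have := hf.2 v
        change ∑ i : Unit, (∑ β : G.A, f (v, β)) ^ 2 ≤ 1
        have h2 : ∑ β : G.A, f (v, β) = 1 := this
        simp [h2])
    rw [Fintype.sum_unique] at h
    rw [zero_add, pow_one]
    exact h
  | succ n ih =>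
    intro f hf
    have hpos : 0 < 2 * Real.sqrt ρ / (1 + ρ) := by
      have := Real.sqrt_pos.2 hρ0
      positivity
    have := tensor_bound G (G.iterTensor n) ρ hρ0 hρ1 hval _ (pow_pos hpos (n + 1)) ih f hf
    rw [pow_succ']
    exact this

end PRB

/-- **Parallel Repetition Bound.** For every projection game `G` with `val(G) ≤ ρ`
(`0 < ρ ≤ 1`) and every positive integer `k`, the `k`-fold parallel repetition
satisfies `val(G^{⊗k}) ≤ (2√ρ/(1+ρ))^{k/2}`. -/
theorem parallel_repetition_bound (G : ProjGame) (ρ : ℝ) (hρ0 : 0 < ρ) (hρ1 : ρ ≤ 1)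
    (hval : G.val ≤ ρ) (k : ℕ) (hk : 0 < k) :
    (G.iterTensor (k - 1)).val ≤ (2 * Real.sqrt ρ / (1 + ρ)) ^ ((k : ℝ) / 2) := by
  have hpos : 0 < 2 * Real.sqrt ρ / (1 + ρ) := by
    have := Real.sqrt_pos.2 hρ0
    positivity
  have h := PRB.val_le _ _ (PRB.iter_bound G ρ hρ0 hρ1 hval (k - 1))
  rw [Nat.sub_add_cancel hk] at h
  refine h.trans (le_of_eq ?_)
  rw [Real.sqrt_eq_rpow, ← Real.rpow_natCast, ← Real.rpow_mul hpos.le]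
  congr 1
  ring
end

section
/- For every projection game G, every ε with 0 ≤ ε ≤ 1 such that val(G) ≤ 1−ε, and every positive integer k, val(G^{⊗k}) ≤ (1 − ε²/16)^k. -/
open Finset

namespace PRH

open Classical in
lemma lovasz {V P : Type} [Fintype V] [Fintype P] (s t : P → V) (a c : P → ℝ)
    (T : Finset V)
    (hpos : ∀ S : Finset V, S.Nonempty → S ⊆ T →
      0 < ∑ p, ((if s p ∈ S ∨ t p ∈ S then a p else 0) -
        (if s p ∈ S ∧ t p ∈ S then c p else 0))) :
    ∀ (n : ℕ) (y : V → ℝ), (∀ v, 0 ≤ y v) → (∀ v, v ∉ T → y v = 0) →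
      (univ.filter (fun v => y v ≠ 0)).card = n →
      0 ≤ ∑ p, (a p * max (y (s p)) (y (t p)) - c p * min (y (s p)) (y (t p))) ∧
      ((∃ v, y v ≠ 0) →
        0 < ∑ p, (a p * max (y (s p)) (y (t p)) - c p * min (y (s p)) (y (t p)))) := by
  intro n
  induction n using Nat.strong_induction_on with
  | _ n ih =>
    intro y hy hT hn
    by_cases h : ∃ v, y v ≠ 0
    swap
    · have h' : ∀ v, y v = 0 := by simpa using h
      refine ⟨by simp [h'], fun h2 => absurd h2 h⟩
    · set S := univ.filter (fun v => y v ≠ 0) with hS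
      have hSne : S.Nonempty := by
        obtain ⟨v, hv⟩ := h
        exact ⟨v, by simp [hS, hv]⟩
      obtain ⟨v0, hv0, hmin⟩ := S.exists_min_image y hSne
      have hmem : ∀ v, v ∈ S ↔ y v ≠ 0 := by simp [hS]
      have ht0 : 0 < y v0 := lt_of_le_of_ne (hy v0) (Ne.symm ((hmem _).1 hv0))
      set y' : V → ℝ := fun v => if v ∈ S then y v - y v0 else 0 with hy'
      have h1 : ∀ v, 0 ≤ y' v := by
        intro v
        simp only [hy']
        split_ifs with hv
        · linarith [hmin v hv]
        · exact le_rfl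
      have hST : S ⊆ T := by
        intro v hv
        by_contra hvT
        exact (hmem v).1 hv (hT v hvT)
      have h2 : ∀ v, v ∉ T → y' v = 0 := by
        intro v hv
        have : v ∉ S := fun hvS => hv (hST hvS)
        simp [hy', this]
      have h3 : (univ.filter (fun v => y' v ≠ 0)).card < n := by
        rw [← hn]
        apply Finset.card_lt_card
        refine ⟨?_, ?_⟩
        · intro v hv
          by_contra hvS
          simp [hy', hvS] at hv
        · intro hsub
          have := hsub hv0
          simp [hy'] at this
      have hrec := (ih _ h3 y' h1 h2 rfl).1
      have hp := hpos S hSne hST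
      have key : ∑ p, (a p * max (y (s p)) (y (t p)) - c p * min (y (s p)) (y (t p)))
          = y v0 * (∑ p, ((if s p ∈ S ∨ t p ∈ S then a p else 0) -
            (if s p ∈ S ∧ t p ∈ S then c p else 0)))
          + ∑ p, (a p * max (y' (s p)) (y' (t p)) - c p * min (y' (s p)) (y' (t p))) := by
        rw [Finset.mul_sum, ← Finset.sum_add_distrib]
        refine Finset.sum_congr rfl fun p _ => ?_
        have hz : ∀ v, v ∉ S → y v = 0 := fun v hv => by
          by_contra h0
          exact hv ((hmem v).2 h0)
        by_cases hs : s p ∈ S <;> by_cases ht : t p ∈ S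
        · simp only [hy', hs, ht, if_true, or_self, and_self]
          rw [max_sub_sub_right, min_sub_sub_right]
          ring
        · have a1 := hmin _ hs
          simp only [hy', hs, ht, if_true, if_false, or_false, and_false, hz _ ht]
          rw [max_eq_left (hy _), min_eq_right (hy _), max_eq_left (by linarith),
            min_eq_right (by linarith)]
          ring
        · have a1 := hmin _ ht
          simp only [hy', hs, ht, if_true, if_false, false_or, false_and, hz _ hs]
          rw [max_eq_right (hy _), min_eq_left (hy _), max_eq_right (by linarith),
            min_eq_left (by linarith)]
          ring
        · simp [hy', hs, ht, hz _ ht, hz _ hs]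
      have : 0 < ∑ p, (a p * max (y (s p)) (y (t p)) - c p * min (y (s p)) (y (t p))) := by
        rw [key]
        have := mul_pos ht0 hp
        linarith
      exact ⟨this.le, fun _ => this⟩

/-- agreement -/
def kap {A : Type} [Fintype A] (K : A → A → ℝ) (g g' : A → ℝ) : ℝ :=
  ∑ β, ∑ β', K β β' * (g β * g' β')

lemma kap_nonneg {A : Type} [Fintype A] (K : A → A → ℝ) (hK : ∀ a b, 0 ≤ K a b)
    (g g' : A → ℝ) (hg : ∀ a, 0 ≤ g a) (hg' : ∀ a, 0 ≤ g' a) : 0 ≤ kap K g g' :=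
  Finset.sum_nonneg fun a _ => Finset.sum_nonneg fun b _ =>
    mul_nonneg (hK _ _) (mul_nonneg (hg _) (hg' _))

lemma kap_le {A : Type} [Fintype A] (K : A → A → ℝ) (hK : ∀ a b, K a b ≤ 1)
    (g g' : A → ℝ) (hg : ∀ a, 0 ≤ g a) (hg' : ∀ a, 0 ≤ g' a) :
    kap K g g' ≤ (∑ a, g a) * (∑ a, g' a) := by
  rw [Finset.sum_mul_sum]
  refine Finset.sum_le_sum fun a _ => Finset.sum_le_sum fun b _ => ?_
  have := mul_nonneg (hg a) (hg' b)
  nlinarith [hK a b]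

lemma kap_div {A : Type} [Fintype A] (K : A → A → ℝ) (g g' : A → ℝ) (x y : ℝ) :
    kap K (fun a => g a / x) (fun a => g' a / y) = kap K g g' / (x * y) := by
  unfold kap
  rw [Finset.sum_div]
  refine Finset.sum_congr rfl fun a _ => ?_
  rw [Finset.sum_div]
  refine Finset.sum_congr rfl fun b _ => ?_
  rw [div_mul_div_comm]
  ring

lemma term_le_aux (M m q l : ℝ) (hm : 0 ≤ m) (hM : m ≤ M) (hq0 : 0 ≤ q) (hq1 : q ≤ 1)
    (hl : 0 < l) :
    M ^ 2 - m ^ 2 * q ≤ l * (M ^ 2 + m ^ 2) + (M ^ 2 + m ^ 2 - 2 * (M * m * q)) / (2 * l) := by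
  set S := M ^ 2 + m ^ 2
  set T := M ^ 2 + m ^ 2 - 2 * (M * m * q)
  have hM0 : 0 ≤ M := hm.trans hM
  have hS : 0 ≤ S := by positivity
  have hMm : 0 ≤ M * m := mul_nonneg hM0 hm
  have hT : 0 ≤ T := by
    simp only [T]; nlinarith [sq_nonneg (M - m)]
  have ht : 0 ≤ M ^ 2 - m ^ 2 * q := by nlinarith [sq_nonneg m, mul_nonneg hm (sub_nonneg.2 hM)]
  have hmain : (M ^ 2 - m ^ 2 * q) ^ 2 ≤ 2 * S * T := by
    -- convexity in `q`
    have e0 : (M ^ 2) ^ 2 ≤ 2 * S * S := by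
      simp only [S]; nlinarith [sq_nonneg M, sq_nonneg m, mul_nonneg (sq_nonneg M) (sq_nonneg m)]
    have e1 : (M ^ 2 - m ^ 2) ^ 2 ≤ 2 * S * (S - 2 * (M * m)) := by
      have : 2 * S * (S - 2 * (M * m)) - (M ^ 2 - m ^ 2) ^ 2 = (M - m) ^ 2 * (M - m) ^ 2 := by
        simp only [S]; ring
      nlinarith [mul_nonneg (sq_nonneg (M - m)) (sq_nonneg (M - m))]
    have e2 : (M ^ 2 - m ^ 2 * q) ^ 2 ≤ (1 - q) * (M ^ 2) ^ 2 + q * (M ^ 2 - m ^ 2) ^ 2 := by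
      have : (1 - q) * (M ^ 2) ^ 2 + q * (M ^ 2 - m ^ 2) ^ 2 - (M ^ 2 - m ^ 2 * q) ^ 2
          = q * (1 - q) * (m ^ 2) ^ 2 := by ring
      have := mul_nonneg (mul_nonneg hq0 (sub_nonneg.2 hq1)) (sq_nonneg (m ^ 2))
      linarith
    have e3 : 2 * S * T = (1 - q) * (2 * S * S) + q * (2 * S * (S - 2 * (M * m))) := by
      simp only [S, T]; ring
    rw [e3]
    have := mul_le_mul_of_nonneg_left e0 (sub_nonneg.2 hq1)
    have := mul_le_mul_of_nonneg_left e1 hq0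
    linarith
  apply abs_le_of_sq_le_sq' _ _ |>.2
  · refine hmain.trans ?_
    have h5 : (l * S + T / (2 * l)) ^ 2 - 2 * S * T = (l * S - T / (2 * l)) ^ 2 := by
      field_simp
      ring
    nlinarith [sq_nonneg (l * S - T / (2 * l))]
  · positivity

lemma term_le (x y k l : ℝ) (hx : 0 ≤ x) (hy : 0 ≤ y) (hk0 : 0 ≤ k) (hk1 : k ≤ x * y)
    (hl : 0 < l) :
    max (x ^ 2) (y ^ 2) - (k / (x * y)) * min (x ^ 2) (y ^ 2) ≤
      l * (x ^ 2 + y ^ 2) + (x ^ 2 + y ^ 2 - 2 * k) / (2 * l) := by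
  have hxy := mul_nonneg hx hy
  have hq0 : 0 ≤ k / (x * y) := div_nonneg hk0 hxy
  have hq1 : k / (x * y) ≤ 1 := div_le_one_of_le₀ hk1 hxy
  have hk : x * y * (k / (x * y)) = k := by
    by_cases h0 : x * y = 0
    · rw [h0] at hk1 ⊢
      simp; linarith
    · exact mul_div_cancel₀ k h0
  rcases le_total x y with h | h
  · have hsq : x ^ 2 ≤ y ^ 2 := by gcongr
    rw [max_eq_right hsq, min_eq_left hsq]
    have := term_le_aux y x _ l hx h hq0 hq1 hl
    rw [mul_comm y x, hk] at this
    rw [mul_comm (k / (x * y)), add_comm (x ^ 2)]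
    exact this
  · have hsq : y ^ 2 ≤ x ^ 2 := by gcongr
    rw [max_eq_left hsq, min_eq_right hsq]
    have := term_le_aux x y _ l hy h hq0 hq1 hl
    rw [hk] at this
    rw [mul_comm (k / (x * y))]
    exact this

open Classical in
lemma rounding {V A I P : Type} [Fintype V] [Fintype A] [Nonempty A] [Fintype I] [Fintype P]
    (s t : P → V) (w : P → ℝ) (hw : ∀ p, 0 ≤ w p) (K : P → A → A → ℝ)
    (hK0 : ∀ p a b, 0 ≤ K p a b) 
    (h : I → V → A → ℝ) (hh : ∀ i v a, 0 ≤ h i v a)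
    (hX : ∀ v, ∑ i, (∑ a, h i v a) ^ 2 = 1)
    (D : P → ℝ) (hD0 : ∀ p, 0 ≤ D p)
    (hD : ∀ p, ∑ i, (max ((∑ a, h i (s p) a) ^ 2) ((∑ a, h i (t p) a) ^ 2)
        - (kap (K p) (h i (s p)) (h i (t p)) / ((∑ a, h i (s p) a) * (∑ a, h i (t p) a)))
          * min ((∑ a, h i (s p) a) ^ 2) ((∑ a, h i (t p) a) ^ 2)) ≤ D p) :
    ∀ (n : ℕ) (R : Finset V), R.card = n → ∃ b : V → A → ℝ, (∀ v a, 0 ≤ b v a) ∧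
      (∀ v, ∑ a, b v a = 1) ∧
      ∑ p, (if s p ∈ R ∧ t p ∈ R then w p * (1 - kap (K p) (b (s p)) (b (t p))) else 0)
        ≤ ∑ p, (if s p ∈ R ∧ t p ∈ R then w p * D p else 0) := by
  intro n
  induction n using Nat.strong_induction_on with
  | _ n ih =>
  intro R hR
  by_cases hRne : R.Nonempty
  swap
  · rw [Finset.not_nonempty_iff_eq_empty] at hRne
    subst hRne
    let a0 : A := Classical.arbitrary A
    refine ⟨fun _ a => if a = a0 then 1 else 0, ?_, ?_, ?_⟩
    · intro v a; dsimp only; split_ifs <;> norm_num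
    · intro v; simp
    · simp
  set X : I → V → ℝ := fun i v => ∑ a, h i v a with hXdef
  have hX0 : ∀ i v, 0 ≤ X i v := fun i v => Finset.sum_nonneg fun a _ => hh i v a
  set Q : I → P → ℝ := fun i p => kap (K p) (h i (s p)) (h i (t p)) / (X i (s p) * X i (t p))
    with hQ
  -- find the step
  obtain ⟨i, S, hSne, hSR, hSX, hψ⟩ : ∃ (i : I) (S : Finset V), S.Nonempty ∧ S ⊆ R ∧
      (∀ v ∈ S, 0 < X i v) ∧
      ∑ p, ((if s p ∈ S ∨ t p ∈ S then
          (if s p ∈ R ∧ t p ∈ R then w p * (1 - D p) else 0) else 0) -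
        (if s p ∈ S ∧ t p ∈ S then
          (if s p ∈ R ∧ t p ∈ R then w p * Q i p else 0) else 0)) ≤ 0 := by
    by_contra hcon
    push Not at hcon
    let y : I → V → ℝ := fun i v => if v ∈ R then (X i v) ^ 2 else 0
    have hyy : ∀ i v, 0 ≤ y i v := by
      intro i v; simp only [y]; split_ifs
      · positivity
      · exact le_rfl
    have hl := fun i => lovasz s t (fun p => if s p ∈ R ∧ t p ∈ R then w p * (1 - D p) else 0)
      (fun p => if s p ∈ R ∧ t p ∈ R then w p * Q i p else 0)
      (R.filter (fun v => 0 < X i v))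
      (fun S h1 h2 => hcon i S h1 (fun v hv => (Finset.mem_filter.1 (h2 hv)).1)
        (fun v hv => (Finset.mem_filter.1 (h2 hv)).2)) _ (y i)
      (hyy i)
      (by
        intro v hv
        simp only [y]
        split_ifs with hvR
        · have : ¬ 0 < X i v := fun h0 => hv (Finset.mem_filter.2 ⟨hvR, h0⟩)
          have : X i v = 0 := le_antisymm (not_lt.1 this) (hX0 i v)
          simp [this]
        · rfl) rfl
    obtain ⟨v0, hv0⟩ := hRne
    have hex : ∃ i, X i v0 ≠ 0 := by
      by_contra hno
      push Not at hno
      have := hX v0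
      have h2 : ∑ i, (X i v0) ^ 2 = 1 := this
      simp [hno] at h2
    obtain ⟨i0, hi0⟩ := hex
    have hpos : 0 < ∑ i, ∑ p, ((if s p ∈ R ∧ t p ∈ R then w p * (1 - D p) else 0)
          * max (y i (s p)) (y i (t p))
        - (if s p ∈ R ∧ t p ∈ R then w p * Q i p else 0) * min (y i (s p)) (y i (t p))) := by
      apply Finset.sum_pos'
      · intro i _; exact (hl i).1
      · exact ⟨i0, Finset.mem_univ _, (hl i0).2 ⟨v0, by simp [y, hv0, hi0]⟩⟩
    rw [Finset.sum_comm] at hpos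
    refine absurd hpos (not_lt.2 (Finset.sum_nonpos fun p _ => ?_))
    by_cases hp : s p ∈ R ∧ t p ∈ R
    · simp only [hp, y, and_self, if_true]
      have e1 : ∀ i, w p * (1 - D p) * max (X i (s p) ^ 2) (X i (t p) ^ 2)
          - w p * Q i p * min (X i (s p) ^ 2) (X i (t p) ^ 2)
          = w p * ((max (X i (s p) ^ 2) (X i (t p) ^ 2)
              - Q i p * min (X i (s p) ^ 2) (X i (t p) ^ 2))
            - D p * max (X i (s p) ^ 2) (X i (t p) ^ 2)) := fun i => by ring
      rw [Finset.sum_congr rfl fun i _ => e1 i, ← Finset.mul_sum, Finset.sum_sub_distrib,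
        ← Finset.mul_sum]
      have e2 : 1 ≤ ∑ i, max (X i (s p) ^ 2) (X i (t p) ^ 2) := by
        rw [← hX (s p)]
        exact Finset.sum_le_sum fun i _ => le_max_left _ _
      have e3 := hD p
      have e4 : ∑ i, (max (X i (s p) ^ 2) (X i (t p) ^ 2)
              - Q i p * min (X i (s p) ^ 2) (X i (t p) ^ 2)) ≤ D p := e3
      have e5 := mul_le_mul_of_nonneg_left e2 (hD0 p)
      exact mul_nonpos_of_nonneg_of_nonpos (hw p) (by linarith)
    · simp [hp]
  have hcard : (R \ S).card < n := by
    rw [← hR]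
    apply Finset.card_lt_card
    refine ⟨Finset.sdiff_subset, fun hsub => ?_⟩
    obtain ⟨v, hv⟩ := hSne
    exact (Finset.mem_sdiff.1 (hsub (hSR hv))).2 hv
  obtain ⟨b', hb0, hb1, hb2⟩ := ih _ hcard (R \ S) rfl
  refine ⟨fun v => if v ∈ S then fun a => h i v a / X i v else b' v, ?_, ?_, ?_⟩
  · intro v a
    dsimp only
    split_ifs
    · exact div_nonneg (hh _ _ _) (hX0 _ _)
    · exact hb0 _ _
  · intro v
    dsimp only
    split_ifs with hv
    · rw [← Finset.sum_div]
      exact div_self (hSX v hv).ne'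
    · exact hb1 v
  · have key : ∀ p, (if s p ∈ R ∧ t p ∈ R then w p * (1 - kap (K p)
          ((fun v => if v ∈ S then fun a => h i v a / X i v else b' v) (s p))
          ((fun v => if v ∈ S then fun a => h i v a / X i v else b' v) (t p))) else 0) ≤
        ((if s p ∈ S ∨ t p ∈ S then
          (if s p ∈ R ∧ t p ∈ R then w p * (1 - D p) else 0) else 0) -
        (if s p ∈ S ∧ t p ∈ S then
          (if s p ∈ R ∧ t p ∈ R then w p * Q i p else 0) else 0))
        + (if s p ∈ R \ S ∧ t p ∈ R \ S then
            w p * (1 - kap (K p) (b' (s p)) (b' (t p))) else 0)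
        + (if s p ∈ R ∧ t p ∈ R then w p * D p else 0)
        - (if s p ∈ R \ S ∧ t p ∈ R \ S then w p * D p else 0) := by
      intro p
      by_cases hp : s p ∈ R ∧ t p ∈ R
      swap
      · have : ¬ (s p ∈ R \ S ∧ t p ∈ R \ S) := fun hq =>
          hp ⟨(Finset.mem_sdiff.1 hq.1).1, (Finset.mem_sdiff.1 hq.2).1⟩
        simp only [hp, this, if_false, ite_self]
        simp
      · have hk1 : ∀ v a, 0 ≤ h i v a / X i v := fun v a => div_nonneg (hh _ _ _) (hX0 _ _)
        by_cases hs : s p ∈ S <;> by_cases ht : t p ∈ S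
        · simp only [hs, ht, hp, Finset.mem_sdiff, if_true, and_self, or_self, not_true, and_false,
            if_false]
          rw [kap_div]
          simp only [hQ]
          apply le_of_eq
          ring
        · simp only [hs, ht, hp, Finset.mem_sdiff, if_true, and_self, not_true, and_false,
            if_false, or_false, false_and]
          have := mul_nonneg (hw p) (kap_nonneg (K p) (hK0 p) (fun a => h i (s p) a / X i (s p))
            (b' (t p)) (hk1 _) (hb0 _))
          linarith
        · simp only [hs, ht, hp, Finset.mem_sdiff, if_true, and_self, not_true, and_false,
            if_false, false_or, false_and]
          have := mul_nonneg (hw p) (kap_nonneg (K p) (hK0 p) (b' (s p))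
            (fun a => h i (t p) a / X i (t p)) (hb0 _) (hk1 _))
          linarith
        · simp only [hs, ht, hp, Finset.mem_sdiff, if_true, and_self, not_false_eq_true,
            if_false, or_self]
          linarith
    have := Finset.sum_le_sum fun p (_ : p ∈ Finset.univ) => key p
    rw [Finset.sum_sub_distrib, Finset.sum_add_distrib, Finset.sum_add_distrib] at this
    linarith

lemma rounding' {V A I P : Type} [Fintype V] [Fintype A] [Nonempty A] [Fintype I] [Fintype P]
    (s t : P → V) (w : P → ℝ) (hw : ∀ p, 0 ≤ w p) (hw1 : ∑ p, w p = 1) (K : P → A → A → ℝ)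
    (hK0 : ∀ p a b, 0 ≤ K p a b) (hK1 : ∀ p a b, K p a b ≤ 1)
    (h : I → V → A → ℝ) (hh : ∀ i v a, 0 ≤ h i v a)
    (hX : ∀ v, ∑ i, (∑ a, h i v a) ^ 2 = 1) (l : ℝ) (hl : 0 < l) :
    ∃ b : V → A → ℝ, (∀ v a, 0 ≤ b v a) ∧ (∀ v, ∑ a, b v a = 1) ∧
      1 - ∑ p, w p * kap (K p) (b (s p)) (b (t p)) ≤
        2 * l + (1 - ∑ i, ∑ p, w p * kap (K p) (h i (s p)) (h i (t p))) / l := by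
  classical
  have hX0 : ∀ i v, 0 ≤ ∑ a, h i v a := fun i v => Finset.sum_nonneg fun a _ => hh i v a
  have hb : ∀ p, ∑ i, (max ((∑ a, h i (s p) a) ^ 2) ((∑ a, h i (t p) a) ^ 2)
        - (kap (K p) (h i (s p)) (h i (t p)) / ((∑ a, h i (s p) a) * (∑ a, h i (t p) a)))
          * min ((∑ a, h i (s p) a) ^ 2) ((∑ a, h i (t p) a) ^ 2)) ≤
      2 * l + (1 - ∑ i, kap (K p) (h i (s p)) (h i (t p))) / l := by
    intro p
    refine (Finset.sum_le_sum fun i _ => term_le _ _ _ l (hX0 _ _) (hX0 _ _)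
      (kap_nonneg _ (hK0 p) _ _ (hh _ _) (hh _ _))
      (kap_le _ (hK1 p) _ _ (hh _ _) (hh _ _)) hl).trans ?_
    rw [Finset.sum_add_distrib, ← Finset.mul_sum, ← Finset.sum_div, Finset.sum_sub_distrib,
      Finset.sum_add_distrib, hX, hX, ← Finset.mul_sum]
    apply le_of_eq
    field_simp
    ring
  have hnn : ∀ p, 0 ≤ 2 * l + (1 - ∑ i, kap (K p) (h i (s p)) (h i (t p))) / l := by
    intro p
    refine le_trans (Finset.sum_nonneg fun i _ => ?_) (hb p)
    have hq1 := div_le_one_of_le₀ (kap_le _ (hK1 p) _ _ (hh i (s p)) (hh i (t p)))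
      (mul_nonneg (hX0 _ _) (hX0 _ _))
    have hm : min ((∑ a, h i (s p) a) ^ 2) ((∑ a, h i (t p) a) ^ 2) ≤
      max ((∑ a, h i (s p) a) ^ 2) ((∑ a, h i (t p) a) ^ 2) := min_le_max
    have hm0 : 0 ≤ min ((∑ a, h i (s p) a) ^ 2) ((∑ a, h i (t p) a) ^ 2) :=
      le_min (sq_nonneg _) (sq_nonneg _)
    have := mul_le_mul_of_nonneg_right hq1 hm0
    linarith
  obtain ⟨b, hb0, hb1, hb2⟩ := rounding s t w hw K hK0 h hh hX _ hnn hb _ univ rfl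
  refine ⟨b, hb0, hb1, ?_⟩
  simp only [Finset.mem_univ, and_self, if_true] at hb2
  have e1 : ∑ p, w p * (1 - kap (K p) (b (s p)) (b (t p))) =
      1 - ∑ p, w p * kap (K p) (b (s p)) (b (t p)) := by
    simp_rw [mul_sub, mul_one]
    rw [Finset.sum_sub_distrib, hw1]
  have e2 : ∑ p, w p * (2 * l + (1 - ∑ i, kap (K p) (h i (s p)) (h i (t p))) / l) =
      2 * l + (1 - ∑ i, ∑ p, w p * kap (K p) (h i (s p)) (h i (t p))) / l := by
    have : ∀ p, w p * (2 * l + (1 - ∑ i, kap (K p) (h i (s p)) (h i (t p))) / l) =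
      w p * (2 * l) + (w p - ∑ i, w p * kap (K p) (h i (s p)) (h i (t p))) / l := by
      intro p; rw [← Finset.mul_sum]; ring
    rw [Finset.sum_congr rfl fun p _ => this p, Finset.sum_add_distrib, ← Finset.sum_mul,
      ← Finset.sum_div, Finset.sum_sub_distrib, hw1, Finset.sum_comm]
    ring
  rw [e1, e2] at hb2
  exact hb2

end PRH

namespace PRH
open ProjGame

variable (G : ProjGame)

abbrev Ed := G.Q2 × (G.A → Option G.A)

noncomputable def NN (f : G.Q2 × G.A → ℝ) (u : G.Q1) (α : G.A) : ℝ :=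
  ∑ e : Ed G, G.μ (u, e.1, e.2) * ∑ β, if e.2 β = some α then f (e.1, β) else 0

lemma op_eq (f : G.Q2 × G.A → ℝ) (u : G.Q1) (α : G.A) :
    G.op f (u, α) = NN G f u α / G.wU u := by
  unfold ProjGame.op NN
  rw [Fintype.sum_prod_type]

lemma wU_eq (u : G.Q1) : G.wU u = ∑ e : Ed G, G.μ (u, e.1, e.2) := by
  unfold ProjGame.wU
  rw [Fintype.sum_prod_type]

lemma wU_nonneg (u : G.Q1) : 0 ≤ G.wU u := by
  rw [wU_eq]
  exact Finset.sum_nonneg fun e _ => G.μ_nonneg _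

lemma wU_sum : ∑ u, G.wU u = 1 := by
  rw [← G.μ_sum, Fintype.sum_prod_type]
  refine Finset.sum_congr rfl fun u _ => ?_
  rw [wU_eq]

lemma mul_div_sq (w n : ℝ) : w * (n / w) ^ 2 = n ^ 2 / w := by
  by_cases h : w = 0
  · simp [h]
  · field_simp

noncomputable def KK (p : G.Q1 × Ed G × Ed G) (β β' : G.A) : ℝ :=
  ∑ α, (if p.2.1.2 β = some α then 1 else 0) * (if p.2.2.2 β' = some α then 1 else 0)

lemma KK_nonneg (p : G.Q1 × Ed G × Ed G) (β β' : G.A) : 0 ≤ KK G p β β' := by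
  refine Finset.sum_nonneg fun α _ => ?_
  split_ifs <;> simp

lemma KK_le (p : G.Q1 × Ed G × Ed G) (β β' : G.A) : KK G p β β' ≤ 1 := by
  unfold KK
  cases h : p.2.1.2 β with
  | none => simp
  | some a =>
    have : ∀ α : G.A, (if (some a : Option G.A) = some α then (1:ℝ) else 0) *
        (if p.2.2.2 β' = some α then 1 else 0) ≤ if a = α then 1 else 0 := by
      intro α
      by_cases h1 : a = α
      · simp only [h1, if_true]; split_ifs <;> norm_num
      · simp [h1]
    refine (Finset.sum_le_sum fun α _ => this α).trans ?_
    simp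

noncomputable def ww (p : G.Q1 × Ed G × Ed G) : ℝ :=
  G.μ (p.1, p.2.1.1, p.2.1.2) * G.μ (p.1, p.2.2.1, p.2.2.2) / G.wU p.1

lemma ww_nonneg (p : G.Q1 × Ed G × Ed G) : 0 ≤ ww G p :=
  div_nonneg (mul_nonneg (G.μ_nonneg _) (G.μ_nonneg _)) (wU_nonneg _ _)

lemma ww_sum : ∑ p, ww G p = 1 := by
  rw [← wU_sum G, Fintype.sum_prod_type]
  refine Finset.sum_congr rfl fun u _ => ?_
  rw [Fintype.sum_prod_type]
  simp only [ww]
  simp_rw [← Finset.sum_div, ← Finset.mul_sum, ← Finset.sum_mul]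
  rw [← wU_eq, mul_self_div_self]

lemma kap_KK (p : G.Q1 × Ed G × Ed G) (g g' : G.A → ℝ) :
    kap (KK G p) g g' = ∑ α, (∑ β, if p.2.1.2 β = some α then g β else 0) *
      (∑ β, if p.2.2.2 β = some α then g' β else 0) := by
  unfold kap KK
  simp_rw [Finset.sum_mul_sum, Finset.sum_mul]
  rw [Finset.sum_comm' (t' := univ) (s' := fun _ => univ) (by simp)]
  rw [Finset.sum_comm]
  conv_rhs => rw [Finset.sum_comm]
  refine Finset.sum_congr rfl fun β _ => ?_
  conv_rhs => rw [Finset.sum_comm]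
  refine Finset.sum_congr rfl fun β' _ => ?_
  refine Finset.sum_congr rfl fun α _ => ?_
  split_ifs <;> simp

lemma normUsq_op (f : G.Q2 × G.A → ℝ) :
    G.normUsq (G.op f) = ∑ p, ww G p *
      kap (KK G p) (fun β => f (p.2.1.1, β)) (fun β => f (p.2.2.1, β)) := by
  unfold ProjGame.normUsq
  rw [Fintype.sum_prod_type]
  refine Finset.sum_congr rfl fun u _ => ?_
  simp_rw [op_eq, kap_KK]
  rw [Finset.mul_sum]
  simp_rw [mul_div_sq]
  conv_rhs => enter [2, p]; rw [Finset.mul_sum]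
  rw [Finset.sum_comm]
  refine Finset.sum_congr rfl fun α _ => ?_
  conv_rhs => rw [Fintype.sum_prod_type]
  rw [NN, sq, Finset.sum_mul_sum, Finset.sum_div]
  refine Finset.sum_congr rfl fun e _ => ?_
  rw [Finset.sum_div]
  refine Finset.sum_congr rfl fun e' _ => ?_
  simp only [ww]
  ring

lemma NN_nonneg (f : G.Q2 × G.A → ℝ) (hf : ∀ p, 0 ≤ f p) (u : G.Q1) (α : G.A) :
    0 ≤ NN G f u α := by
  refine Finset.sum_nonneg fun e _ => mul_nonneg (G.μ_nonneg _)
    (Finset.sum_nonneg fun β _ => ?_)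
  split_ifs
  · exact hf _
  · exact le_rfl

lemma op_nonneg (f : G.Q2 × G.A → ℝ) (hf : ∀ p, 0 ≤ f p) (q : G.Q1 × G.A) :
    0 ≤ G.op f q := by
  obtain ⟨u, α⟩ := q
  rw [op_eq]
  exact div_nonneg (NN_nonneg G f hf u α) (wU_nonneg G u)

lemma op_sum_le (f : G.Q2 × G.A → ℝ) (hf : G.IsBob f) (u : G.Q1) :
    ∑ α, G.op f (u, α) ≤ 1 := by
  simp_rw [op_eq]
  rw [← Finset.sum_div]
  apply div_le_one_of_le₀ _ (wU_nonneg G u)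
  unfold NN
  rw [wU_eq, Finset.sum_comm]
  refine Finset.sum_le_sum fun e _ => ?_
  rw [← Finset.mul_sum]
  apply mul_le_of_le_one_right (G.μ_nonneg _)
  rw [Finset.sum_comm, ← hf.2 e.1]
  refine Finset.sum_le_sum fun β _ => ?_
  cases h : e.2 β with
  | none => simpa using hf.1 _
  | some a => simp

lemma alice_sq (g : G.Q1 × G.A → ℝ) (hg0 : ∀ p, 0 ≤ g p) (hg : ∀ u, ∑ α, g (u, α) ≤ 1) :
    G.normUsq g ≤ 1 := by
  rw [← wU_sum G]
  refine Finset.sum_le_sum fun u _ => ?_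
  apply mul_le_of_le_one_right (wU_nonneg G u)
  refine le_trans (Finset.sum_le_sum fun α _ => ?_) (hg u)
  have h1 : g (u, α) ≤ 1 := (Finset.single_le_sum (f := fun α => g (u, α))
    (fun a _ => hg0 (u, a)) (Finset.mem_univ α)).trans (hg u)
  nlinarith [hg0 (u, α)]

lemma inn_sq_le (g g' : G.Q1 × G.A → ℝ) : (G.inn g g') ^ 2 ≤ G.normUsq g * G.normUsq g' := by
  have flat : ∀ F : G.Q1 × G.A → ℝ, ∑ u, G.wU u * ∑ α, F (u, α) = ∑ q, G.wU q.1 * F q := by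
    intro F
    rw [Fintype.sum_prod_type]
    exact Finset.sum_congr rfl fun u _ => Finset.mul_sum _ _ _
  have h1 : G.inn g g' = _ := flat (fun q => g q * g' q)
  have h2 : G.normUsq g = _ := flat (fun q => g q ^ 2)
  have h3 : G.normUsq g' = _ := flat (fun q => g' q ^ 2)
  rw [h1, h2, h3]
  have := Finset.sum_mul_sq_le_sq_mul_sq (univ : Finset (G.Q1 × G.A))
    (fun q => √(G.wU q.1) * g q) (fun q => √(G.wU q.1) * g' q)
  have e : ∀ g : G.Q1 × G.A → ℝ, ∑ q, (√(G.wU q.1) * g q) ^ 2 = ∑ q, G.wU q.1 * g q ^ 2 := by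
    intro g
    refine Finset.sum_congr rfl fun q _ => ?_
    rw [mul_pow, Real.sq_sqrt (wU_nonneg G q.1)]
  rw [e, e] at this
  refine le_trans (le_of_eq ?_) this
  congr 1
  refine Finset.sum_congr rfl fun q _ => ?_
  have := Real.mul_self_sqrt (wU_nonneg G q.1)
  linear_combination (-(g q * g' q)) * this

lemma inn_le_one (f g : _) (hf : G.IsBob f) (hg : G.IsAlice g) : G.inn g (G.op f) ≤ 1 := by
  have h1 := inn_sq_le G g (G.op f)
  have h2 := alice_sq G g hg.1 (fun u => (hg.2 u).le)
  have h3 := alice_sq G (G.op f) (op_nonneg G f hf.1) (op_sum_le G f hf)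
  have h4 : 0 ≤ G.normUsq (G.op f) := Finset.sum_nonneg fun u _ =>
    mul_nonneg (wU_nonneg G u) (Finset.sum_nonneg fun α _ => sq_nonneg _)
  have h5 : (G.inn g (G.op f)) ^ 2 ≤ 1 := by nlinarith
  nlinarith

lemma le_val (f : _) (hf : G.IsBob f) : G.normUsq (G.op f) ≤ G.val := by
  let a0 : G.A := Classical.arbitrary _
  let g : G.Q1 × G.A → ℝ := fun q => G.op f q +
    if q.2 = a0 then 1 - ∑ α, G.op f (q.1, α) else 0
  have hge : ∀ q, G.op f q ≤ g q := by
    intro q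
    have := op_sum_le G f hf q.1
    simp only [g]
    split_ifs <;> linarith
  have hg : G.IsAlice g := by
    refine ⟨fun q => (op_nonneg G f hf.1 q).trans (hge q), fun u => ?_⟩
    simp only [g]
    rw [Finset.sum_add_distrib]
    simp
  have h1 : G.inn g (G.op f) ≤ G.val := by
    apply le_csSup
    · refine ⟨1, ?_⟩
      rintro x ⟨f, g, hf, hg, rfl⟩
      exact inn_le_one G f g hf hg
    · exact ⟨f, g, hf, hg, rfl⟩
  refine le_trans ?_ h1
  refine Finset.sum_le_sum fun u _ => mul_le_mul_of_nonneg_left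
    (Finset.sum_le_sum fun α _ => ?_) (wU_nonneg G u)
  rw [sq]
  exact mul_le_mul_of_nonneg_right (hge _) (op_nonneg G f hf.1 _)

lemma val_le (C : ℝ) (hC0 : 0 ≤ C) (hC : ∀ f, G.IsBob f → G.normUsq (G.op f) ≤ C ^ 2) :
    G.val ≤ C := by
  apply csSup_le
  · let a0 : G.A := Classical.arbitrary _
    refine ⟨_, fun q => if q.2 = a0 then 1 else 0, fun q => if q.2 = a0 then 1 else 0,
      ⟨?_, ?_⟩, ⟨?_, ?_⟩, rfl⟩
    · intro q; dsimp only; split_ifs <;> norm_num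
    · intro q; simp
    · intro q; dsimp only; split_ifs <;> norm_num
    · intro q; simp
  · rintro x ⟨f, g, hf, hg, rfl⟩
    have h1 := inn_sq_le G g (G.op f)
    have h2 := alice_sq G g hg.1 (fun u => (hg.2 u).le)
    have h4 : 0 ≤ G.normUsq (G.op f) := Finset.sum_nonneg fun u _ =>
      mul_nonneg (wU_nonneg G u) (Finset.sum_nonneg fun α _ => sq_nonneg _)
    have h5 : (G.inn g (G.op f)) ^ 2 ≤ C ^ 2 := by
      have := mul_le_mul_of_nonneg_right h2 h4
      linarith [hC f hf]
    exact (abs_le_of_sq_le_sq' h5 hC0).2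

/-- the key bound for normalized vector assignments -/
lemma vec_one (ε : ℝ) (hε : 0 < ε) (hval : G.val ≤ 1 - ε) {I : Type} [Fintype I]
    (h : I → G.Q2 × G.A → ℝ) (hh : ∀ i q, 0 ≤ h i q)
    (hX : ∀ v, ∑ i, (∑ β, h i (v, β)) ^ 2 = 1) :
    ∑ i, G.normUsq (G.op (h i)) ≤ 1 - ε ^ 2 / 8 := by
  obtain ⟨b, hb0, hb1, hb⟩ := rounding' (fun p : G.Q1 × Ed G × Ed G => p.2.1.1)
    (fun p => p.2.2.1) (ww G) (ww_nonneg G) (ww_sum G) (KK G) (KK_nonneg G) (KK_le G)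
    (fun i v β => h i (v, β)) (fun i v a => hh i _) hX (ε / 4) (by positivity)
  have h1 := le_val G (fun q => b q.1 q.2) ⟨fun q => hb0 _ _, hb1⟩
  rw [normUsq_op] at h1
  simp_rw [normUsq_op]
  set Z := ∑ i, ∑ p, ww G p * kap (KK G p) (fun β => h i (p.2.1.1, β))
    (fun β => h i (p.2.2.1, β)) with hZ
  have h2 : ε ≤ 2 * (ε / 4) + (1 - Z) / (ε / 4) := by
    refine le_trans ?_ hb
    have h3 : ∑ p, ww G p * kap (KK G p) (b p.2.1.1) (b p.2.2.1) ≤ G.val := h1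
    linarith
  have h3 : ε / 2 ≤ (1 - Z) / (ε / 4) := by linarith
  rw [le_div_iff₀ (by positivity)] at h3
  nlinarith

lemma normUsq_nonneg (g : G.Q1 × G.A → ℝ) : 0 ≤ G.normUsq g := Finset.sum_nonneg fun u _ =>
      mul_nonneg (wU_nonneg G u) (Finset.sum_nonneg fun α _ => sq_nonneg _)

lemma op_smul (c : ℝ) (f : G.Q2 × G.A → ℝ) : G.op (fun q => c * f q) = fun q => c * G.op f q := by
  funext ⟨u, α⟩
  rw [op_eq, op_eq]
  unfold NN
  rw [← mul_div_assoc, Finset.mul_sum]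
  congr 1
  refine Finset.sum_congr rfl fun e _ => ?_
  conv_rhs => rw [mul_left_comm, Finset.mul_sum]
  congr 1
  refine Finset.sum_congr rfl fun β _ => ?_
  split_ifs <;> simp

lemma normUsq_smul (c : ℝ) (g : G.Q1 × G.A → ℝ) :
    G.normUsq (fun q => c * g q) = c ^ 2 * G.normUsq g := by
  unfold ProjGame.normUsq
  rw [Finset.mul_sum]
  refine Finset.sum_congr rfl fun u _ => ?_
  simp_rw [mul_pow]
  rw [← Finset.mul_sum]
  ring

lemma vec_le (ε : ℝ) (hε : 0 < ε) (hval : G.val ≤ 1 - ε) {I : Type} [Fintype I]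
    (h : I → G.Q2 × G.A → ℝ) (hh : ∀ i q, 0 ≤ h i q)
    (hX : ∀ v, ∑ i, (∑ β, h i (v, β)) ^ 2 ≤ 1) :
    ∑ i, G.normUsq (G.op (h i)) ≤ 1 - ε ^ 2 / 8 := by
  let a0 : G.A := Classical.arbitrary _
  let h' : Option I → G.Q2 × G.A → ℝ := fun o q => match o with
    | some i => h i q
    | none => if q.2 = a0 then √(1 - ∑ i, (∑ β, h i (q.1, β)) ^ 2) else 0
  have := vec_one G ε hε hval h' (by
    intro o q
    cases o with
    | some i => exact hh i q
    | none =>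
      simp only [h']
      split_ifs
      · exact Real.sqrt_nonneg _
      · exact le_rfl) (by
    intro v
    rw [Fintype.sum_option]
    simp only [h']
    rw [Finset.sum_ite_eq' univ a0]
    simp only [Finset.mem_univ, if_true]
    rw [Real.sq_sqrt (by linarith [hX v])]
    ring)
  rw [Fintype.sum_option] at this
  have h0 := normUsq_nonneg G (G.op (h' none))
  have h1 : ∑ i, G.normUsq (G.op (h i)) = ∑ i, G.normUsq (G.op (h' (some i))) := rfl
  linarith

lemma vec_le_C (ε : ℝ) (hε : 0 < ε) (hval : G.val ≤ 1 - ε) {I : Type} [Fintype I]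
    (ρ : I → ℝ) (hρ : ∀ i, 0 ≤ ρ i)
    (h : I → G.Q2 × G.A → ℝ) (hh : ∀ i q, 0 ≤ h i q) (C : ℝ) (hC : 0 < C)
    (hX : ∀ v, ∑ i, ρ i * (∑ β, h i (v, β)) ^ 2 ≤ C) :
    ∑ i, ρ i * G.normUsq (G.op (h i)) ≤ (1 - ε ^ 2 / 8) * C := by
  have hsq : ∀ i, (√(ρ i / C)) ^ 2 = ρ i / C := fun i =>
    Real.sq_sqrt (div_nonneg (hρ i) hC.le)
  have := vec_le G ε hε hval (fun i q => √(ρ i / C) * h i q)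
    (fun i q => mul_nonneg (Real.sqrt_nonneg _) (hh i q)) (by
      intro v
      simp_rw [← Finset.mul_sum, mul_pow, hsq, div_mul_eq_mul_div]
      rw [← Finset.sum_div]
      exact div_le_one_of_le₀ (hX v) hC.le)
  simp_rw [op_smul, normUsq_smul, hsq, div_mul_eq_mul_div] at this
  rw [← Finset.sum_div, div_le_iff₀ hC] at this
  exact this

variable (H : ProjGame)

lemma tensor_sum (u : G.Q1) (u' : H.Q1)
    (Ψ : (G.Q2 × H.Q2) → (G.A × H.A → Option (G.A × H.A)) → ℝ) :
    ∑ e : Ed (G.tensor H), (G.tensor H).μ ((u, u'), e.1, e.2) * Ψ e.1 e.2 =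
      ∑ e : Ed G, ∑ e' : Ed H, G.μ (u, e.1, e.2) * H.μ (u', e'.1, e'.2) *
        Ψ (e.1, e'.1) (tensorC e.2 e'.2) := by
  have hpush : ∀ Φ : (G.Q1 × H.Q1) × (G.Q2 × H.Q2) × (G.A × H.A → Option (G.A × H.A)) → ℝ,
      ∑ x, (G.tensor H).μ x * Φ x =
      ∑ y1 : G.Q1 × G.Q2 × (G.A → Option G.A), ∑ y2 : H.Q1 × H.Q2 × (H.A → Option H.A),
        G.μ y1 * H.μ y2 * Φ ((y1.1, y2.1), (y1.2.1, y2.2.1), tensorC y1.2.2 y2.2.2) := by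
    intro Φ
    rw [← Fintype.sum_prod_type']
    simp only [ProjGame.tensor]
    simp_rw [Finset.sum_mul]
    rw [Finset.sum_comm]
    refine Finset.sum_congr rfl fun y _ => ?_
    simp_rw [ite_mul, zero_mul]
    rw [Finset.sum_eq_single ((y.1.1, y.2.1), (y.1.2.1, y.2.2.1), tensorC y.1.2.2 y.2.2.2)]
    · rw [if_pos rfl]
    · intro x _ hx
      rw [if_neg (Ne.symm hx)]
    · exact fun h => absurd (Finset.mem_univ _) h
  have h1 := hpush (fun x => if x.1 = (u, u') then Ψ x.2.1 x.2.2 else 0)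
  have h2 : ∑ x : (G.Q1 × H.Q1) × Ed (G.tensor H), (G.tensor H).μ x *
        (if x.1 = (u, u') then Ψ x.2.1 x.2.2 else 0) =
      ∑ e : Ed (G.tensor H), (G.tensor H).μ ((u, u'), e.1, e.2) * Ψ e.1 e.2 := by
    rw [Fintype.sum_prod_type, Finset.sum_eq_single (u, u')]
    · simp
      rfl
    · intro b _ hb
      simp [hb]
    · simp
  refine h2.symm.trans (h1.trans ?_)
  rw [Fintype.sum_prod_type, Finset.sum_eq_single u]
  · refine Finset.sum_congr rfl fun e _ => ?_
    rw [Fintype.sum_prod_type, Finset.sum_eq_single u']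
    · simp
    · intro b _ hb
      simp [hb]
    · simp
  · intro b _ hb
    simp [hb]
  · simp

lemma tensor_wU (u : G.Q1) (u' : H.Q1) : (G.tensor H).wU (u, u') = G.wU u * H.wU u' := by
  rw [wU_eq G, wU_eq H, Finset.sum_mul_sum]
  have := tensor_sum G H u u' (fun _ _ => 1)
  simp only [mul_one] at this
  exact (wU_eq (G.tensor H) (u, u')).trans this

noncomputable def hF (F : (G.Q2 × H.Q2) × (G.A × H.A) → ℝ) (i : H.Q1 × H.A) (q : G.Q2 × G.A) : ℝ :=
  H.op (fun q' => F ((q.1, q'.1), (q.2, q'.2))) i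

lemma tensorC_eq {A A' : Type} (π : A → Option A) (π' : A' → Option A') (b b' a a') :
    tensorC π π' (b, b') = some (a, a') ↔ π b = some a ∧ π' b' = some a' := by
  unfold tensorC
  cases h : π b <;> cases h' : π' b' <;> simp [h, h']

lemma tensor_op (F : (G.Q2 × H.Q2) × (G.A × H.A) → ℝ) (u : G.Q1) (u' : H.Q1)
    (α : G.A) (α' : H.A) :
    (G.tensor H).op F ((u, u'), (α, α')) = G.op (hF G H F (u', α')) (u, α) := by
  refine (op_eq (G.tensor H) F (u, u') (α, α')).trans ?_
  rw [op_eq G, tensor_wU, mul_comm (G.wU u), ← div_div]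
  congr 1
  unfold NN
  have := tensor_sum G H u u' (fun v π => ∑ β, if π β = some (α, α') then F (v, β) else 0)
  refine (congrArg (· / H.wU u') this).trans ?_
  rw [Finset.sum_div]
  refine Finset.sum_congr rfl fun e _ => ?_
  simp_rw [mul_assoc, ← Finset.mul_sum]
  rw [mul_div_assoc]
  congr 1
  simp only [hF]
  simp_rw [op_eq]
  unfold NN
  have e1 : ∀ β : G.A, (if e.2 β = some α then
      (∑ e' : Ed H, H.μ (u', e'.1, e'.2) * ∑ β', if e'.2 β' = some α' then
        F ((e.1, e'.1), (β, β')) else 0) / H.wU u' else 0) =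
      (∑ e' : Ed H, H.μ (u', e'.1, e'.2) * (if e.2 β = some α then ∑ β', if e'.2 β' = some α' then
        F ((e.1, e'.1), (β, β')) else 0 else 0)) / H.wU u' := by
    intro β
    split_ifs <;> simp
  rw [Finset.sum_congr rfl fun β _ => e1 β, ← Finset.sum_div, Finset.sum_comm]
  congr 1
  refine Finset.sum_congr rfl fun e' _ => ?_
  rw [← Finset.mul_sum]
  congr 1
  rw [Fintype.sum_prod_type]
  refine Finset.sum_congr rfl fun β _ => ?_
  by_cases h : e.2 β = some α
  · simp [tensorC_eq, h]
  · simp [tensorC_eq, h]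

lemma tensor_step (ε : ℝ) (hε : 0 < ε) (hval : G.val ≤ 1 - ε) (C : ℝ) (hC : 0 < C)
    (hH : ∀ f, H.IsBob f → H.normUsq (H.op f) ≤ C)
    (F : (G.Q2 × H.Q2) × (G.A × H.A) → ℝ) (hF' : (G.tensor H).IsBob F) :
    (G.tensor H).normUsq ((G.tensor H).op F) ≤ (1 - ε ^ 2 / 8) * C := by
  have h1 : (G.tensor H).normUsq ((G.tensor H).op F) =
      ∑ i : H.Q1 × H.A, H.wU i.1 * G.normUsq (G.op (hF G H F i)) := by
    have e0 : (G.tensor H).normUsq ((G.tensor H).op F) =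
      ∑ u : G.Q1 × H.Q1, (G.tensor H).wU u * ∑ α : G.A × H.A, ((G.tensor H).op F (u, α)) ^ 2 := rfl
    rw [e0, Fintype.sum_prod_type, Fintype.sum_prod_type, Finset.sum_comm]
    refine Finset.sum_congr rfl fun u' _ => ?_
    unfold ProjGame.normUsq
    simp_rw [Fintype.sum_prod_type, tensor_op, tensor_wU, Finset.mul_sum]
    conv_rhs => rw [Finset.sum_comm]
    refine Finset.sum_congr rfl fun u _ => ?_
    rw [Finset.sum_comm]
    refine Finset.sum_congr rfl fun α' _ => Finset.sum_congr rfl fun α _ => ?_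
    ring
  rw [h1]
  refine vec_le_C G ε hε hval (fun i : H.Q1 × H.A => H.wU i.1) (fun i => wU_nonneg H _)
    (hF G H F) ?_ C hC ?_
  swap
  · intro v
    refine le_trans (le_of_eq ?_) (hH (fun q' => ∑ β, F ((v, q'.1), (β, q'.2))) ⟨?_, ?_⟩)
    · unfold ProjGame.normUsq
      rw [Fintype.sum_prod_type]
      refine Finset.sum_congr rfl fun u' _ => ?_
      rw [Finset.mul_sum]
      refine Finset.sum_congr rfl fun α' _ => ?_
      congr 2
      simp only [hF]
      simp_rw [op_eq]
      rw [← Finset.sum_div]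
      congr 1
      unfold NN
      rw [Finset.sum_comm]
      refine Finset.sum_congr rfl fun e _ => ?_
      rw [← Finset.mul_sum]
      congr 1
      rw [Finset.sum_comm]
      refine Finset.sum_congr rfl fun β' _ => ?_
      split_ifs <;> simp
    · intro q
      exact Finset.sum_nonneg fun β _ => hF'.1 _
    · intro v'
      have := hF'.2 (v, v')
      rw [Finset.sum_comm, ← Fintype.sum_prod_type']
      exact this
  · intro i q
    exact op_nonneg H _ (fun q' => hF'.1 _) i

lemma iter_bound (ε : ℝ) (hε : 0 < ε) (hε1 : ε ≤ 1) (hval : G.val ≤ 1 - ε) (n : ℕ) :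
    ∀ f, (G.iterTensor n).IsBob f →
      (G.iterTensor n).normUsq ((G.iterTensor n).op f) ≤ (1 - ε ^ 2 / 8) ^ (n + 1) := by
  induction n with
  | zero =>
    intro f hf
    have := vec_le G ε hε hval (fun _ : Unit => f) (fun _ q => hf.1 q) (by
      intro v
      have h0 : ∑ β, f (v, β) = 1 := hf.2 v
      rw [Fintype.sum_unique]
      exact (congrArg (· ^ 2) h0).le.trans (by norm_num))
    simpa [ProjGame.iterTensor] using this
  | succ n ih =>
    intro f hf
    have hL : 0 < 1 - ε ^ 2 / 8 := by nlinarith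
    rw [pow_succ']
    exact tensor_step G (G.iterTensor n) ε hε hval _ (pow_pos hL _) ih f hf

lemma iter_bound0 (f : _) (hf : G.IsBob f) : G.normUsq (G.op f) ≤ 1 :=
  alice_sq G (G.op f) (op_nonneg G f hf.1) (op_sum_le G f hf)

end PRH

/-- **Parallel repetition for high-value games.** For any projection game `G` with
`val(G) ≤ 1 - ε`, `val(G^{⊗k}) ≤ (1 - ε²/16)^k`. -/
theorem parallel_repetition_high_value (G : ProjGame) (ε : ℝ) (hε0 : 0 ≤ ε) (hε1 : ε ≤ 1)
    (hval : G.val ≤ 1 - ε) (k : ℕ) (hk : 0 < k) :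
    (G.iterTensor (k - 1)).val ≤ (1 - ε ^ 2 / 16) ^ k := by
  have hb : 0 ≤ 1 - ε ^ 2 / 16 := by nlinarith
  apply PRH.val_le _ _ (pow_nonneg hb k)
  intro f hf
  rcases hε0.eq_or_lt with h | h
  · subst h
    simpa using PRH.iter_bound0 _ f hf
  · have := PRH.iter_bound G ε h hε1 hval (k - 1) f hf
    rw [Nat.sub_add_cancel hk] at this
    refine this.trans ?_
    rw [← pow_mul, mul_comm k 2, pow_mul]
    apply pow_le_pow_left₀
    · nlinarith
    · nlinarith [sq_nonneg (ε ^ 2)]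
end

section
/- For every projection game G, every ρ with 0 ≤ ρ ≤ 1 such that val(G) ≤ ρ, and every positive integer k, val(G^{⊗k}) ≤ (4ρ)^{k/4}. -/
open Finset

theorem pr_threshold {V : Type*} [Fintype V] [DecidableEq V] (y : V → ℝ) (h0 : ∀ v, 0 ≤ y v)
    (h1 : ∀ v, y v ≤ 1) : ∃ w : Finset V → ℝ, (∀ S, 0 ≤ w S) ∧ ∑ S, w S = 1 ∧
      (∀ v, ∑ S, (if v ∈ S then w S else 0) = y v) ∧
      ∀ v v', ∑ S, (if v ∈ S ∧ v' ∈ S then w S else 0) = min (y v) (y v') := by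
  classical
  let T : ℝ → Finset V := fun τ => univ.filter (fun v => τ < y v)
  let E : Finset V → Set ℝ := fun S => {τ | T τ = S} ∩ Set.Ico 0 1
  have hmT : ∀ S, MeasurableSet {τ | T τ = S} := by
    intro S
    have : {τ | T τ = S} = ⋂ v, {τ | τ < y v ↔ v ∈ S} := by
      ext τ
      simp [T, Finset.ext_iff]
    rw [this]
    refine MeasurableSet.iInter fun v => ?_
    by_cases hv : v ∈ S
    · simp only [hv, iff_true]
      exact measurableSet_Iio
    · simp only [hv, iff_false, not_lt]
      exact measurableSet_Ici
  have hm : ∀ S, MeasurableSet (E S) := fun S => (hmT S).inter measurableSet_Ico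
  have key : ∀ (P : Finset V → Prop) [DecidablePred P] (b : ℝ), 0 ≤ b →
      (∀ τ, (0 ≤ τ ∧ τ < 1 ∧ P (T τ)) ↔ (0 ≤ τ ∧ τ < b)) →
      ∑ S, (if P S then MeasureTheory.volume.real (E S) else 0) = b := by
    intro P _ b hb hP
    have hfin : ∀ S, MeasureTheory.volume (E S) ≠ ⊤ := fun S =>
      ne_top_of_le_ne_top (by simp) (MeasureTheory.measure_mono (Set.inter_subset_right (s := {τ | T τ = S}) (t := Set.Ico (0:ℝ) 1)))
    rw [← Finset.sum_filter, ← MeasureTheory.measureReal_biUnion_finset (h := fun S _ => hfin S)]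
    · have : (⋃ S ∈ univ.filter P, E S) = Set.Ico 0 b := by
        ext τ
        simp only [Set.mem_iUnion, Set.mem_Ico, ← hP τ]
        simp [E]
        tauto
      rw [this]
      simp [hb]
    · intro S _ S' _ hne
      refine Set.disjoint_left.2 fun τ h h' => hne (h.1.symm.trans h'.1)
    · intro S _; exact hm S
  refine ⟨fun S => MeasureTheory.volume.real (E S), fun S => MeasureTheory.measureReal_nonneg, ?_, ?_, ?_⟩
  · simpa using key (fun _ => True) 1 zero_le_one (by simp)
  · intro v
    refine key (fun S => v ∈ S) (y v) (h0 v) (fun τ => ?_)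
    simp only [T, mem_filter, mem_univ, true_and]
    have := h1 v
    constructor
    · tauto
    · rintro ⟨a, b⟩; exact ⟨a, by linarith, b⟩
  · intro v v'
    refine key (fun S => v ∈ S ∧ v' ∈ S) _ (le_min (h0 v) (h0 v')) (fun τ => ?_)
    simp only [T, mem_filter, mem_univ, true_and, lt_min_iff]
    have := h1 v
    constructor
    · tauto
    · rintro ⟨a, b, c⟩; exact ⟨a, by linarith, b, c⟩

/-- iterated correlated sampling -/
theorem pr_sampling {V B I : Type} [Fintype V] [DecidableEq V] [Fintype B] [Nonempty B] [Fintype I]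
    [Nonempty I] (x : V → I → ℝ) (h : I → V × B → ℝ)
    (hx : ∀ v, ∑ i, x v i ^ 2 ≤ 1) (hh : ∀ i p, 0 ≤ h i p) (hh1 : ∀ i v, ∑ b, h i (v, b) = 1)
    (t : ℕ) : ∃ (J : Type) (_ : Fintype J) (w : J → ℝ) (F : J → V × B → ℝ),
      (∀ j, 0 ≤ w j) ∧ ∑ j, w j = 1 ∧ (∀ j p, 0 ≤ F j p) ∧ (∀ j v, ∑ b, F j (v, b) = 1) ∧
      ∀ p q, (∑ i, h i p * h i q * min (x p.1 i ^ 2) (x q.1 i ^ 2)) / 2 *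
        (1 - (1 - 1 / (Fintype.card I : ℝ)) ^ t) ≤ ∑ j, w j * (F j p * F j q) := by
  induction t with
  | zero =>
    refine ⟨Unit, inferInstance, fun _ => 1, fun _ => h (Classical.arbitrary I), by simp, by simp,
      fun _ => hh _, fun _ => hh1 _, fun p q => ?_⟩
    simp [mul_nonneg, hh]
  | succ t ih =>
    obtain ⟨J, _, w, F, hw, hw1, hF, hF1, hK⟩ := ih
    have hx1 : ∀ i v, x v i ^ 2 ≤ 1 := fun i v =>
      (Finset.single_le_sum (f := fun i => x v i ^ 2) (fun _ _ => sq_nonneg _) (mem_univ i)).trans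
        (hx v)
    choose W hW hW1 hW2 hW3 using fun i => pr_threshold (fun v => x v i ^ 2)
      (fun v => sq_nonneg _) (hx1 i)
    set ε : ℝ := 1 / (Fintype.card I : ℝ) with hε
    have hn : (1 : ℝ) ≤ Fintype.card I := by exact_mod_cast Fintype.card_pos
    have hε0 : 0 ≤ ε := by positivity
    have hε1 : ε ≤ 1 := by rw [hε]; exact (div_le_one (by linarith)).2 hn
    have hεn : ∑ _i : I, ε = 1 := by simp [hε]
    refine ⟨I × Finset V × J, inferInstance, fun k => ε * W k.1 k.2.1 * w k.2.2,
      fun k p => if p.1 ∈ k.2.1 then h k.1 p else F k.2.2 p, ?_, ?_, ?_, ?_, ?_⟩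
    · exact fun k => mul_nonneg (mul_nonneg hε0 (hW _ _)) (hw _)
    · simp only [Fintype.sum_prod_type, ← Finset.mul_sum, hw1, mul_one, hW1, hεn]
    · intro k p; dsimp only; split_ifs; exacts [hh _ _, hF _ _]
    · intro k v; dsimp only; split_ifs; exacts [hh1 _ _, hF1 _ _]
    · intro p q
      have hKpos : 0 ≤ ∑ j, w j * (F j p * F j q) :=
        sum_nonneg fun j _ => mul_nonneg (hw j) (mul_nonneg (hF _ _) (hF _ _))
      set K := ∑ j, w j * (F j p * F j q) with hKdef
      set a := ∑ i, h i p * h i q * min (x p.1 i ^ 2) (x q.1 i ^ 2) with ha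
      have ha0 : 0 ≤ a := sum_nonneg fun i _ => mul_nonneg (mul_nonneg (hh _ _) (hh _ _))
        (le_min (sq_nonneg _) (sq_nonneg _))
      set c : ℝ := (1 - (1 - ε) ^ t) with hc
      have hc0 : 0 ≤ c := by
        have := pow_le_one₀ (n := t) (by linarith : 0 ≤ 1 - ε) (by linarith); linarith
      have hc1 : c ≤ 1 := by
        have := pow_nonneg (by linarith : 0 ≤ 1 - ε) t; linarith
      have hN : ∀ i, 1 - x p.1 i ^ 2 - x q.1 i ^ 2 ≤
          ∑ S, (if p.1 ∉ S ∧ q.1 ∉ S then W i S else 0) := by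
        intro i
        rw [← hW1 i, ← hW2 i p.1, ← hW2 i q.1, ← sum_sub_distrib, ← sum_sub_distrib]
        refine sum_le_sum fun S _ => ?_
        have := hW i S
        by_cases h1 : p.1 ∈ S <;> by_cases h2 : q.1 ∈ S <;> simp [h1, h2, this]
      have hN0 : ∀ i, 0 ≤ ∑ S, (if p.1 ∉ S ∧ q.1 ∉ S then W i S else 0) := fun i =>
        sum_nonneg fun S _ => by split_ifs; exacts [hW _ _, le_rfl]
      have hNsum : 1 - 2 * ε ≤ ε * ∑ i, ∑ S, (if p.1 ∉ S ∧ q.1 ∉ S then W i S else 0) := by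
        have h1 := sum_le_sum fun i (_ : i ∈ (univ : Finset I)) => hN i
        rw [sum_sub_distrib, sum_sub_distrib] at h1
        have h2 : ε * ∑ _i : I, (1:ℝ) = 1 := by rw [mul_sum]; simpa using hεn
        have h3 := mul_le_mul_of_nonneg_left h1 hε0
        have h4 := mul_le_mul_of_nonneg_left (hx p.1) hε0
        have h5 := mul_le_mul_of_nonneg_left (hx q.1) hε0
        nlinarith
      have hmain : ε * a + (ε * ∑ i, ∑ S, (if p.1 ∉ S ∧ q.1 ∉ S then W i S else 0)) * K ≤
          ∑ k : I × Finset V × J, ε * W k.1 k.2.1 * w k.2.2 *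
            ((if p.1 ∈ k.2.1 then h k.1 p else F k.2.2 p) *
             (if q.1 ∈ k.2.1 then h k.1 q else F k.2.2 q)) := by
        simp only [Fintype.sum_prod_type]
        rw [ha, mul_assoc, ← mul_add, sum_mul, ← sum_add_distrib, mul_sum]
        refine sum_le_sum fun i _ => ?_
        have e1 : min (x p.1 i ^ 2) (x q.1 i ^ 2) =
          ∑ S, (if p.1 ∈ S ∧ q.1 ∈ S then W i S else 0) := (hW3 i _ _).symm
        rw [e1, mul_sum, sum_mul, ← sum_add_distrib, mul_sum]
        refine sum_le_sum fun S _ => ?_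
        have hWS := hW i S
        by_cases h1 : p.1 ∈ S <;> by_cases h2 : q.1 ∈ S
        · simp only [h1, h2, if_true]
          simp only [mul_right_comm _ (w _), ← mul_sum, hw1]
          simp
          apply le_of_eq; ring
        · simp only [h1, h2]
          simp
          exact sum_nonneg fun j _ => mul_nonneg (mul_nonneg (mul_nonneg hε0 hWS) (hw _)) (mul_nonneg (hh _ _) (hF _ _))
        · simp only [h1, h2]
          simp
          exact sum_nonneg fun j _ => mul_nonneg (mul_nonneg (mul_nonneg hε0 hWS) (hw _)) (mul_nonneg (hF _ _) (hh _ _))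
        · simp only [h1, h2]
          simp
          rw [hKdef, mul_sum, mul_sum]
          apply le_of_eq
          exact sum_congr rfl fun j _ => by ring
      refine le_trans ?_ hmain
      have hk : a / 2 * c ≤ K := hK p q
      set N := ε * ∑ i, ∑ S, (if p.1 ∉ S ∧ q.1 ∉ S then W i S else 0) with hNd
      have hN0' : 0 ≤ N := mul_nonneg hε0 (sum_nonneg fun i _ => hN0 i)
      have e : 1 - (1 - ε) ^ (t+1) = ε + (1 - ε) * c := by rw [hc]; ring
      rw [e]
      have g1 := mul_le_mul_of_nonneg_left hk hN0'
      have g2 := mul_le_mul_of_nonneg_right hNsum (by positivity : 0 ≤ a / 2 * c)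
      have g3 : 0 ≤ a / 2 * ε * (1 - c) := mul_nonneg (by positivity) (by linarith)
      nlinarith

theorem pr_vector {V B I : Type} [Fintype V] [DecidableEq V] [Fintype B] [Nonempty B] [Fintype I]
    [Nonempty I] (W : V × B → V × B → ℝ) (m : V → V → ℝ) (ρ : ℝ)
    (hW : ∀ p q, 0 ≤ W p q) (hm : ∀ v b v' b', W (v, b) (v', b') ≤ m v v')
    (hm1 : ∑ v, ∑ v', m v v' ≤ 1)
    (hρ : ∀ F : V × B → ℝ, (∀ p, 0 ≤ F p) → (∀ v, ∑ b, F (v, b) = 1) →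
      ∑ p, ∑ q, W p q * (F p * F q) ≤ ρ)
    (f : V × B → I → ℝ) (hf : ∀ p i, 0 ≤ f p i) (hf1 : ∀ v, ∑ i, (∑ b, f (v, b) i) ^ 2 ≤ 1) :
    (∑ p, ∑ q, ∑ i, W p q * (f p i * f q i)) ^ 2 ≤ 4 * ρ := by
  classical
  set x : V → I → ℝ := fun v i => ∑ b, f (v, b) i with hxd
  have hx0 : ∀ v i, 0 ≤ x v i := fun v i => sum_nonneg fun b _ => hf _ _
  let h : I → V × B → ℝ := fun i p =>
    if x p.1 i = 0 then 1 / (Fintype.card B : ℝ) else f p i / x p.1 i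
  have hh : ∀ i p, 0 ≤ h i p := by
    intro i p; dsimp only [h]; split_ifs
    · positivity
    · exact div_nonneg (hf _ _) (hx0 _ _)
  have hh1 : ∀ i v, ∑ b, h i (v, b) = 1 := by
    intro i v; dsimp only [h]; split_ifs with h0
    · simp
    · rw [← sum_div]; exact div_self h0
  have hfh : ∀ i p, f p i = h i p * x p.1 i := by
    intro i p; dsimp only [h]; split_ifs with h0
    · rw [h0, mul_zero]
      exact (sum_eq_zero_iff_of_nonneg (fun b _ => hf (p.1, b) i)).1 h0 p.2 (mem_univ _)
    · field_simp
  set A := ∑ p, ∑ q, W p q * ∑ i, h i p * h i q * min (x p.1 i ^ 2) (x q.1 i ^ 2) with hA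
  have hAρ : A / 2 ≤ ρ := by
    have hn : (1 : ℝ) ≤ Fintype.card I := by exact_mod_cast Fintype.card_pos
    have hlim : Filter.Tendsto (fun t : ℕ => A / 2 * (1 - (1 - 1 / (Fintype.card I : ℝ)) ^ t))
        Filter.atTop (nhds (A / 2 * (1 - 0))) := by
      refine Filter.Tendsto.const_mul _ (Filter.Tendsto.const_sub _ ?_)
      apply tendsto_pow_atTop_nhds_zero_of_lt_one
      · rw [sub_nonneg]; exact (div_le_one (by linarith)).2 hn
      · have : 0 < 1 / (Fintype.card I : ℝ) := by positivity
        linarith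
    rw [sub_zero, mul_one] at hlim
    refine le_of_tendsto' hlim fun t => ?_
    obtain ⟨J, _, w, F, hw, hw1, hF, hF1, hK⟩ := pr_sampling x h hf1 hh hh1 t
    calc A / 2 * (1 - (1 - 1 / (Fintype.card I : ℝ)) ^ t)
        = ∑ p, ∑ q, W p q * ((∑ i, h i p * h i q * min (x p.1 i ^ 2) (x q.1 i ^ 2)) / 2 *
          (1 - (1 - 1 / (Fintype.card I : ℝ)) ^ t)) := by
          rw [hA, sum_div, sum_mul]
          refine sum_congr rfl fun p _ => ?_
          rw [sum_div, sum_mul]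
          exact sum_congr rfl fun q _ => by ring
      _ ≤ ∑ p, ∑ q, W p q * ∑ j, w j * (F j p * F j q) :=
          sum_le_sum fun p _ => sum_le_sum fun q _ =>
            mul_le_mul_of_nonneg_left (hK p q) (hW p q)
      _ = ∑ j, w j * ∑ p, ∑ q, W p q * (F j p * F j q) := by
          simp only [mul_sum]
          rw [sum_comm]
          conv_lhs => enter [2, q]; rw [sum_comm]
          rw [sum_comm]
          refine sum_congr rfl fun j _ => ?_
          rw [sum_comm]
          exact sum_congr rfl fun p _ => sum_congr rfl fun q _ => by ring
      _ ≤ ∑ j, w j * ρ := sum_le_sum fun j _ =>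
            mul_le_mul_of_nonneg_left (hρ (F j) (hF j) (hF1 j)) (hw j)
      _ = ρ := by rw [← sum_mul, hw1, one_mul]
  set Bd := ∑ p, ∑ q, W p q * ∑ i, h i p * h i q * max (x p.1 i ^ 2) (x q.1 i ^ 2) with hBd
  have hB : Bd ≤ 2 := by
    calc Bd ≤ ∑ p : V × B, ∑ q : V × B, m p.1 q.1 * ∑ i, h i p * h i q * (x p.1 i ^ 2 + x q.1 i ^ 2) := by
          refine sum_le_sum fun p _ => sum_le_sum fun q _ => ?_
          refine mul_le_mul (hm _ _ _ _) (sum_le_sum fun i _ => ?_) ?_ ((hW p q).trans (hm _ _ _ _))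
          · refine mul_le_mul_of_nonneg_left ?_ (mul_nonneg (hh _ _) (hh _ _))
            exact max_le (by nlinarith [sq_nonneg (x q.1 i)]) (by nlinarith [sq_nonneg (x p.1 i)])
          · exact sum_nonneg fun i _ => mul_nonneg (mul_nonneg (hh _ _) (hh _ _))
              (le_max_of_le_left (sq_nonneg _))
      _ = ∑ v, ∑ v', m v v' * ∑ i, (x v i ^ 2 + x v' i ^ 2) := by
          simp only [Fintype.sum_prod_type]
          refine sum_congr rfl fun v _ => ?_
          rw [sum_comm]
          refine sum_congr rfl fun v' _ => ?_
          simp only [← mul_sum]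
          congr 1
          simp only [mul_assoc]
          conv_lhs => enter [2, b]; rw [sum_comm]
          rw [sum_comm]
          refine sum_congr rfl fun i _ => ?_
          simp only [← mul_sum, ← sum_mul, hh1, one_mul]
      _ ≤ ∑ v, ∑ v', m v v' * 2 := by
          refine sum_le_sum fun v _ => sum_le_sum fun v' _ => ?_
          refine mul_le_mul_of_nonneg_left ?_
            ((hW (v, Classical.arbitrary B) (v', Classical.arbitrary B)).trans (hm _ _ _ _))
          rw [sum_add_distrib]
          linarith [hf1 v, hf1 v']
      _ ≤ 2 := by simp only [← sum_mul]; linarith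
  have hCS : (∑ p, ∑ q, ∑ i, W p q * (f p i * f q i)) ^ 2 ≤ A * Bd := by
    have := Finset.sum_sq_le_sum_mul_sum_of_sq_le_mul
      (univ : Finset ((V × B) × (V × B) × I))
      (r := fun k => W k.1 k.2.1 * (f k.1 k.2.2 * f k.2.1 k.2.2))
      (f := fun k => W k.1 k.2.1 * (h k.2.2 k.1 * h k.2.2 k.2.1 * min (x k.1.1 k.2.2 ^ 2) (x k.2.1.1 k.2.2 ^ 2)))
      (g := fun k => W k.1 k.2.1 * (h k.2.2 k.1 * h k.2.2 k.2.1 * max (x k.1.1 k.2.2 ^ 2) (x k.2.1.1 k.2.2 ^ 2)))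
      (fun k _ => mul_nonneg (hW _ _) (mul_nonneg (mul_nonneg (hh _ _) (hh _ _)) (le_min (sq_nonneg _) (sq_nonneg _))))
      (fun k _ => mul_nonneg (hW _ _) (mul_nonneg (mul_nonneg (hh _ _) (hh _ _)) (le_max_of_le_left (sq_nonneg _))))
      (fun k _ => le_of_eq <| by
        have e := min_mul_max (x k.1.1 k.2.2 ^ 2) (x k.2.1.1 k.2.2 ^ 2)
        rw [hfh, hfh]
        linear_combination (-(W k.1 k.2.1 * h k.2.2 k.1 * h k.2.2 k.2.1)^2) * e)
    have e1 : ∀ φ : (V × B) × (V × B) × I → ℝ, ∑ k, φ k = ∑ p, ∑ q, ∑ i, φ (p, q, i) := by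
      intro φ
      rw [Fintype.sum_prod_type]
      exact sum_congr rfl fun p _ => Fintype.sum_prod_type _
    rw [e1, e1, e1] at this
    have e2 : A = ∑ p, ∑ q, ∑ i, W p q * (h i p * h i q * min (x p.1 i ^ 2) (x q.1 i ^ 2)) := by
      simp only [hA, mul_sum]
    have e3 : Bd = ∑ p, ∑ q, ∑ i, W p q * (h i p * h i q * max (x p.1 i ^ 2) (x q.1 i ^ 2)) := by
      simp only [hBd, mul_sum]
    rw [e2, e3]
    exact this
  have hA0 : 0 ≤ A := sum_nonneg fun p _ => sum_nonneg fun q _ => mul_nonneg (hW _ _)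
    (sum_nonneg fun i _ => mul_nonneg (mul_nonneg (hh _ _) (hh _ _)) (le_min (sq_nonneg _) (sq_nonneg _)))
  nlinarith [mul_le_mul_of_nonneg_left hB hA0]

namespace ProjGame

/-- kernel of the game operator -/
noncomputable def prM (G : ProjGame) (u : G.Q1) (α : G.A) (p : G.Q2 × G.A) : ℝ :=
  (∑ π, G.μ (u, p.1, π) * if π p.2 = some α then 1 else 0) / G.wU u

/-- conditional distribution of `v` given `u` -/
noncomputable def prm (G : ProjGame) (u : G.Q1) (v : G.Q2) : ℝ := (∑ π, G.μ (u, v, π)) / G.wU u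

theorem pr_wU_nonneg (G : ProjGame) (u : G.Q1) : 0 ≤ G.wU u :=
  sum_nonneg fun _ _ => sum_nonneg fun _ _ => G.μ_nonneg _

theorem pr_wU_sum (G : ProjGame) : ∑ u, G.wU u = 1 := by
  rw [← G.μ_sum]
  simp only [Fintype.sum_prod_type, wU]

theorem pr_op_eq (G : ProjGame) (f : G.Q2 × G.A → ℝ) (u : G.Q1) (α : G.A) :
    G.op f (u, α) = ∑ p, G.prM u α p * f p := by
  simp only [op, prM, Fintype.sum_prod_type, div_mul_eq_mul_div, ← sum_div]
  congr 1
  refine sum_congr rfl fun v _ => ?_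
  simp only [sum_mul, mul_sum]
  rw [sum_comm]
  refine sum_congr rfl fun b _ => sum_congr rfl fun π _ => ?_
  split_ifs <;> simp

theorem pr_M_nonneg (G : ProjGame) (u : G.Q1) (α : G.A) (p : G.Q2 × G.A) : 0 ≤ G.prM u α p :=
  div_nonneg (sum_nonneg fun _ _ => mul_nonneg (G.μ_nonneg _) (by split_ifs <;> norm_num))
    (G.pr_wU_nonneg u)

theorem pr_M_sum (G : ProjGame) (u : G.Q1) (p : G.Q2 × G.A) :
    ∑ α, G.prM u α p ≤ G.prm u p.1 := by
  simp only [prM, prm, ← sum_div]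
  refine div_le_div_of_nonneg_right ?_ (G.pr_wU_nonneg u)
  rw [sum_comm]
  refine sum_le_sum fun π _ => ?_
  rw [← mul_sum]
  refine mul_le_of_le_one_right (G.μ_nonneg _) ?_
  cases h : π p.2 with
  | none => simp
  | some a => simp

theorem pr_m_sum (G : ProjGame) (u : G.Q1) : ∑ v, G.prm u v ≤ 1 := by
  simp only [prm, ← sum_div]
  exact div_self_le_one _

theorem pr_m_nonneg (G : ProjGame) (u : G.Q1) (v : G.Q2) : 0 ≤ G.prm u v :=
  div_nonneg (sum_nonneg fun _ _ => G.μ_nonneg _) (G.pr_wU_nonneg u)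

theorem pr_op_nonneg (G : ProjGame) (f : G.Q2 × G.A → ℝ) (hf : ∀ p, 0 ≤ f p) (p) :
    0 ≤ G.op f p := by
  obtain ⟨u, α⟩ := p
  rw [pr_op_eq]
  exact sum_nonneg fun p _ => mul_nonneg (G.pr_M_nonneg _ _ _) (hf p)

theorem pr_op_sum (G : ProjGame) (f : G.Q2 × G.A → ℝ) (hf : G.IsBob f) (u) :
    ∑ α, G.op f (u, α) ≤ 1 := by
  simp only [pr_op_eq]
  rw [sum_comm]
  calc ∑ p, ∑ α, G.prM u α p * f p ≤ ∑ p : G.Q2 × G.A, G.prm u p.1 * f p := by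
        refine sum_le_sum fun p _ => ?_
        rw [← sum_mul]
        exact mul_le_mul_of_nonneg_right (G.pr_M_sum u p) (hf.1 p)
    _ = ∑ v, G.prm u v := by
        simp only [Fintype.sum_prod_type, ← mul_sum, hf.2, mul_one]
    _ ≤ 1 := G.pr_m_sum u

theorem pr_inn_sq (G : ProjGame) (g g' : G.Q1 × G.A → ℝ) (hg : G.IsAlice g) :
    (G.inn g g') ^ 2 ≤ G.normUsq g' := by
  have h1 : G.normUsq g ≤ 1 := by
    rw [← G.pr_wU_sum]
    refine sum_le_sum fun u _ => mul_le_of_le_one_right (G.pr_wU_nonneg u) ?_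
    rw [← hg.2 u]
    refine sum_le_sum fun α _ => ?_
    have : g (u, α) ≤ 1 := by
      rw [← hg.2 u]
      exact single_le_sum (f := fun α => g (u, α)) (fun _ _ => hg.1 _) (mem_univ α)
    nlinarith [hg.1 (u, α)]
  have h2 : 0 ≤ G.normUsq g' :=
    sum_nonneg fun u _ => mul_nonneg (G.pr_wU_nonneg u) (sum_nonneg fun _ _ => sq_nonneg _)
  have h3 : (G.inn g g') ^ 2 ≤ G.normUsq g * G.normUsq g' := by
    have := Finset.sum_sq_le_sum_mul_sum_of_sq_le_mul (univ : Finset (G.Q1 × G.A))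
      (r := fun k => G.wU k.1 * (g k * g' k)) (f := fun k => G.wU k.1 * g k ^ 2)
      (g := fun k => G.wU k.1 * g' k ^ 2)
      (fun k _ => mul_nonneg (G.pr_wU_nonneg _) (sq_nonneg _))
      (fun k _ => mul_nonneg (G.pr_wU_nonneg _) (sq_nonneg _))
      (fun k _ => le_of_eq (by ring))
    rw [Fintype.sum_prod_type, Fintype.sum_prod_type, Fintype.sum_prod_type] at this
    simp only [← mul_sum] at this
    exact this
  nlinarith

theorem pr_inn_mono (G : ProjGame) (g h g' : G.Q1 × G.A → ℝ) (hg : ∀ p, g p ≤ h p)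
    (hg' : ∀ p, 0 ≤ g' p) : G.inn g g' ≤ G.inn h g' :=
  sum_le_sum fun u _ => mul_le_mul_of_nonneg_left (sum_le_sum fun α _ =>
    mul_le_mul_of_nonneg_right (hg _) (hg' _)) (G.pr_wU_nonneg u)

theorem pr_norm_le_one (G : ProjGame) (f : G.Q2 × G.A → ℝ) (hf : G.IsBob f) :
    G.normUsq (G.op f) ≤ 1 := by
  rw [← G.pr_wU_sum]
  refine sum_le_sum fun u _ => mul_le_of_le_one_right (G.pr_wU_nonneg u) ?_
  have h1 := G.pr_op_sum f hf u
  refine le_trans (sum_le_sum fun α _ => ?_) h1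
  have : G.op f (u, α) ≤ 1 := le_trans
    (single_le_sum (f := fun α => G.op f (u, α)) (fun _ _ => G.pr_op_nonneg f hf.1 _) (mem_univ α)) h1
  nlinarith [G.pr_op_nonneg f hf.1 (u, α)]

theorem pr_inn_le_val (G : ProjGame) (f g) (hf : G.IsBob f) (hg : G.IsAlice g) :
    G.inn g (G.op f) ≤ G.val := by
  refine le_csSup ⟨1, ?_⟩ ⟨f, g, hf, hg, rfl⟩
  rintro x ⟨f, g, hf, hg, rfl⟩
  have := (G.pr_inn_sq g (G.op f) hg).trans (G.pr_norm_le_one f hf)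
  exact (abs_le_one_iff_mul_self_le_one.2 (by nlinarith) |> abs_le.1).2

theorem pr_norm_le_val (G : ProjGame) (f) (hf : G.IsBob f) :
    G.normUsq (G.op f) ≤ G.val := by
  classical
  let g : G.Q1 × G.A → ℝ := fun p => G.op f p +
    (1 - ∑ α, G.op f (p.1, α)) / (Fintype.card G.A : ℝ)
  have hpos : ∀ p : G.Q1 × G.A, 0 ≤ (1 - ∑ α, G.op f (p.1, α)) / (Fintype.card G.A : ℝ) :=
    fun p => div_nonneg (by linarith [G.pr_op_sum f hf p.1]) (by positivity)
  have hg : G.IsAlice g := by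
    refine ⟨fun p => add_nonneg (G.pr_op_nonneg f hf.1 p) (hpos p), fun u => ?_⟩
    simp only [g, sum_add_distrib, sum_const, card_univ, nsmul_eq_mul]
    have : (Fintype.card G.A : ℝ) ≠ 0 := by exact_mod_cast Fintype.card_ne_zero
    field_simp
    ring
  refine le_trans ?_ (G.pr_inn_le_val f g hf hg)
  refine le_trans (le_of_eq ?_) (G.pr_inn_mono (G.op f) g (G.op f)
    (fun p => le_add_of_nonneg_right (hpos p)) (G.pr_op_nonneg f hf.1))
  simp only [normUsq, inn, sq]

/-- quadratic form of the game -/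
noncomputable def prW (G : ProjGame) (p q : G.Q2 × G.A) : ℝ :=
  ∑ u, G.wU u * ∑ α, G.prM u α p * G.prM u α q

theorem pr_norm_eq (G : ProjGame) (f : G.Q2 × G.A → ℝ) :
    G.normUsq (G.op f) = ∑ p, ∑ q, G.prW p q * (f p * f q) := by
  simp only [normUsq, pr_op_eq, prW, sq, mul_sum, sum_mul]
  conv_lhs => enter [2, u]; rw [sum_comm]
  rw [sum_comm]
  refine sum_congr rfl fun p _ => ?_
  conv_lhs => enter [2, u]; rw [sum_comm]
  rw [sum_comm]
  refine sum_congr rfl fun q _ => sum_congr rfl fun u _ => sum_congr rfl fun α _ => ?_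
  ring

theorem pr_vec_one (G : ProjGame) (ρ : ℝ) (hval : G.val ≤ ρ) {I : Type} [Fintype I] [Nonempty I]
    (f : G.Q2 × G.A → I → ℝ) (hf : ∀ p i, 0 ≤ f p i)
    (hf1 : ∀ v, ∑ i, (∑ b, f (v, b) i) ^ 2 ≤ 1) :
    (∑ i, G.normUsq (G.op (fun p => f p i))) ^ 2 ≤ 4 * ρ := by
  have hW : ∀ p q, 0 ≤ G.prW p q := fun p q => sum_nonneg fun u _ =>
    mul_nonneg (G.pr_wU_nonneg u) (sum_nonneg fun α _ =>
      mul_nonneg (G.pr_M_nonneg _ _ _) (G.pr_M_nonneg _ _ _))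
  have := pr_vector G.prW (fun v v' => ∑ u, G.wU u * (G.prm u v * G.prm u v')) ρ hW
    (by
      intro v b v' b'
      refine sum_le_sum fun u _ => mul_le_mul_of_nonneg_left ?_ (G.pr_wU_nonneg u)
      calc ∑ α, G.prM u α (v, b) * G.prM u α (v', b')
          ≤ ∑ α, G.prM u α (v, b) * G.prm u v' := by
            refine sum_le_sum fun α _ => mul_le_mul_of_nonneg_left ?_ (G.pr_M_nonneg _ _ _)
            exact (single_le_sum (f := fun α => G.prM u α (v', b'))
              (fun _ _ => G.pr_M_nonneg _ _ _) (mem_univ α)).trans (G.pr_M_sum u (v', b'))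
        _ ≤ _ := by
            rw [← sum_mul]
            exact mul_le_mul_of_nonneg_right (G.pr_M_sum u (v, b)) (G.pr_m_nonneg _ _))
    (by
      calc ∑ v, ∑ v', ∑ u, G.wU u * (G.prm u v * G.prm u v')
          = ∑ u, G.wU u * ((∑ v, G.prm u v) * ∑ v', G.prm u v') := by
            simp only [sum_mul_sum]
            simp only [mul_sum]
            conv_lhs => enter [2, v]; rw [sum_comm]
            rw [sum_comm]
        _ ≤ ∑ u, G.wU u := by
            refine sum_le_sum fun u _ => mul_le_of_le_one_right (G.pr_wU_nonneg u) ?_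
            exact mul_le_one₀ (G.pr_m_sum u) (sum_nonneg fun _ _ => G.pr_m_nonneg _ _) (G.pr_m_sum u)
        _ ≤ 1 := G.pr_wU_sum.le)
    (by
      intro F hF hF1
      rw [← pr_norm_eq]
      exact (G.pr_norm_le_val F ⟨hF, hF1⟩).trans hval)
    f hf hf1
  refine le_trans (le_of_eq ?_) this
  congr 1
  simp only [pr_norm_eq]
  rw [sum_comm]
  refine sum_congr rfl fun p _ => ?_
  rw [sum_comm]

theorem pr_op_smul (G : ProjGame) (c : ℝ) (f : G.Q2 × G.A → ℝ) (p) :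
    G.op (fun q => c * f q) p = c * G.op f p := by
  obtain ⟨u, α⟩ := p
  simp only [pr_op_eq, mul_sum]
  exact sum_congr rfl fun q _ => by ring

theorem pr_norm_smul (G : ProjGame) (c : ℝ) (f : G.Q2 × G.A → ℝ) :
    G.normUsq (G.op (fun q => c * f q)) = c ^ 2 * G.normUsq (G.op f) := by
  simp only [normUsq, pr_op_smul, mul_pow, ← mul_sum]
  rw [mul_sum]
  exact sum_congr rfl fun q _ => by ring

theorem pr_vec (G : ProjGame) (ρ : ℝ) (hval : G.val ≤ ρ) {I : Type} [Fintype I]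
    [Nonempty I] (f : G.Q2 × G.A → I → ℝ) (hf : ∀ p i, 0 ≤ f p i) (C : ℝ) (hC : 0 ≤ C)
    (hf1 : ∀ v, ∑ i, (∑ b, f (v, b) i) ^ 2 ≤ C) :
    ∑ i, G.normUsq (G.op (fun p => f p i)) ≤ Real.sqrt (4 * ρ) * C := by
  rcases hC.eq_or_lt with rfl | hC
  · have h0 : ∀ p i, f p i = 0 := by
      rintro ⟨v, b⟩ i
      have h1 : (∑ b, f (v, b) i) ^ 2 ≤ 0 :=
        (single_le_sum (f := fun i => (∑ b, f (v, b) i) ^ 2) (fun _ _ => sq_nonneg _)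
          (mem_univ i)).trans (hf1 v)
      have h2 : ∑ b, f (v, b) i = 0 := pow_eq_zero_iff two_ne_zero |>.1 (le_antisymm h1 (sq_nonneg _))
      exact (sum_eq_zero_iff_of_nonneg (fun b _ => hf (v, b) i)).1 h2 b (mem_univ _)
    simp [pr_norm_eq, h0]
  · set c := (Real.sqrt C)⁻¹ with hc
    have hc0 : 0 ≤ c := by positivity
    have hc2 : c ^ 2 * C = 1 := by
      rw [hc, inv_pow, Real.sq_sqrt hC.le]; field_simp
    have := G.pr_vec_one ρ hval (fun p i => c * f p i) (fun p i => mul_nonneg hc0 (hf p i))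
      (by
        intro v
        simp only [← mul_sum, mul_pow]
        rw [← hc2]
        exact mul_le_mul_of_nonneg_left (hf1 v) (sq_nonneg _))
    simp only [pr_norm_smul, ← mul_sum] at this
    have h2 := Real.le_sqrt_of_sq_le this
    have h3 := mul_le_mul_of_nonneg_right h2 hC.le
    calc _ = (c ^ 2 * C) * ∑ i, G.normUsq (G.op (fun p => f p i)) := by rw [hc2, one_mul]
      _ ≤ _ := by linarith

theorem pr_tensor_sum (G H : ProjGame) (u : G.Q1) (u' : H.Q1)
    (φ : G.Q2 × H.Q2 → (G.A × H.A → Option (G.A × H.A)) → ℝ) :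
    ∑ v, ∑ π, (G.tensor H).μ ((u, u'), v, π) * φ v π =
      ∑ v, ∑ π, ∑ v', ∑ π', G.μ (u, v, π) * H.μ (u', v', π') * φ (v, v') (tensorC π π') := by
  have key : ∀ (v : G.Q2 × H.Q2) (π : G.A × H.A → Option (G.A × H.A)),
      (G.tensor H).μ ((u, u'), v, π) * φ v π =
      ∑ y1 : G.Q2 × (G.A → Option G.A), ∑ y2 : H.Q2 × (H.A → Option H.A),
        if (y1.1, y2.1) = v ∧ tensorC y1.2 y2.2 = π then
          G.μ (u, y1) * H.μ (u', y2) * φ v π else 0 := by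
    intro v π
    simp only [tensor]
    rw [sum_mul, Fintype.sum_prod_type, Fintype.sum_prod_type]
    rw [Finset.sum_eq_single u]
    · refine sum_congr rfl fun y1 _ => ?_
      rw [Fintype.sum_prod_type, Finset.sum_eq_single u']
      · refine sum_congr rfl fun y2 _ => ?_
        simp only [Prod.mk.injEq, true_and]
        split_ifs <;> simp
      · intro b _ hb; simp [hb]
      · simp
    · intro b _ hb; simp [hb]
    · simp
  have e : ∀ (ψ : G.Q2 × H.Q2 → (G.A × H.A → Option (G.A × H.A)) → ℝ),
      ∑ v : (G.tensor H).Q2, ∑ π : (G.tensor H).A → Option (G.tensor H).A, ψ v π =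
      ∑ k : (G.Q2 × H.Q2) × (G.A × H.A → Option (G.A × H.A)), ψ k.1 k.2 := by
    intro ψ
    rw [Fintype.sum_prod_type]
    rfl
  refine (e (fun v π => (G.tensor H).μ ((u, u'), v, π) * φ v π)).trans ?_
  simp only [key]
  rw [sum_comm]
  conv_lhs => enter [2, y]; rw [sum_comm]
  rw [Fintype.sum_prod_type]
  refine sum_congr rfl fun v _ => sum_congr rfl fun π _ => ?_
  rw [Fintype.sum_prod_type]
  refine sum_congr rfl fun v' _ => sum_congr rfl fun π' _ => ?_
  rw [Finset.sum_eq_single ((v, v'), tensorC π π')]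
  · simp
  · rintro ⟨a, b⟩ _ hb
    rw [if_neg]
    rintro ⟨rfl, rfl⟩
    exact hb rfl
  · simp

theorem pr_tensor_wU (G H : ProjGame) (u : G.Q1) (u' : H.Q1) :
    (G.tensor H).wU (u, u') = G.wU u * H.wU u' := by
  have := pr_tensor_sum G H u u' (fun _ _ => 1)
  simp only [mul_one] at this
  refine Eq.trans ?_ (this.trans ?_)
  · rfl
  · simp only [wU, ← mul_sum, ← sum_mul]

theorem pr_tensorC_iff {A A' : Type} (π : A → Option A) (π' : A' → Option A') (b : A) (b' : A')
    (a : A) (a' : A') : tensorC π π' (b, b') = some (a, a') ↔ π b = some a ∧ π' b' = some a' := by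
  simp only [tensorC]
  cases π b <;> cases π' b' <;> simp

theorem pr_tensor_op (G H : ProjGame) (f : (G.Q2 × H.Q2) × (G.A × H.A) → ℝ)
    (u : G.Q1) (u' : H.Q1) (α : G.A) (α' : H.A) :
    (G.tensor H).op f ((u, u'), (α, α')) =
      G.op (fun p => H.op (fun q => f ((p.1, q.1), (p.2, q.2))) (u', α')) (u, α) := by
  have h1 := pr_tensor_sum G H u u' (fun v π => ∑ b, if π b = some (α, α') then f (v, b) else 0)
  have h2 : (G.tensor H).op f ((u, u'), (α, α')) =
      (∑ v, ∑ π, ∑ v', ∑ π', G.μ (u, v, π) * H.μ (u', v', π') *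
        ∑ b, if tensorC π π' b = some (α, α') then f ((v, v'), b) else 0) /
        (G.wU u * H.wU u') := by
    rw [← h1, ← pr_tensor_wU]
    rfl
  rw [h2]
  simp only [op]
  rw [mul_comm (G.wU u), ← div_div]
  congr 1
  rw [sum_div]
  refine sum_congr rfl fun v _ => ?_
  rw [sum_div]
  refine sum_congr rfl fun π _ => ?_
  have h3 : ∀ b, (if π b = some α then (∑ v', ∑ π', H.μ (u', v', π') *
      ∑ b', if π' b' = some α' then f ((v, v'), (b, b')) else 0) / H.wU u' else 0) =
      (∑ v', ∑ π', H.μ (u', v', π') *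
      ∑ b', if tensorC π π' (b, b') = some (α, α') then f ((v, v'), (b, b')) else 0) / H.wU u' := by
    intro b
    by_cases hb : π b = some α <;> simp [pr_tensorC_iff, hb]
  simp only [h3]
  rw [← sum_div, ← mul_div_assoc]
  congr 1
  conv_rhs => rw [sum_comm, mul_sum]
  refine sum_congr rfl fun v' _ => ?_
  conv_rhs => rw [sum_comm, mul_sum]
  refine sum_congr rfl fun π' _ => ?_
  rw [← mul_sum, mul_assoc, Fintype.sum_prod_type]

theorem pr_tensor_norm (G H : ProjGame) (ρ C : ℝ) (hval : G.val ≤ ρ) (hC : 0 ≤ C)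
    (hH : ∀ f, H.IsBob f → H.normUsq (H.op f) ≤ C) (f) (hf : (G.tensor H).IsBob f) :
    (G.tensor H).normUsq ((G.tensor H).op f) ≤ Real.sqrt (4 * ρ) * C := by
  change (G.Q2 × H.Q2) × (G.A × H.A) → ℝ at f
  have hf0 : ∀ p, 0 ≤ f p := hf.1
  have hf1 : ∀ v v', ∑ b, ∑ b', f ((v, v'), (b, b')) = 1 := by
    intro v v'
    have := hf.2 (v, v')
    rw [← this]
    exact (Fintype.sum_prod_type (fun b : G.A × H.A => f ((v, v'), b))).symm
  let h : G.Q2 × G.A → H.Q1 × H.A → ℝ := fun p i =>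
    Real.sqrt (H.wU i.1) * H.op (fun q => f ((p.1, q.1), (p.2, q.2))) i
  have := G.pr_vec ρ hval h
    (fun p i => mul_nonneg (Real.sqrt_nonneg _) (H.pr_op_nonneg _ (fun _ => hf0 _) _)) C hC
    (by
      intro v
      have hb : H.IsBob (fun q => ∑ b, f ((v, q.1), (b, q.2))) := by
        refine ⟨fun p => sum_nonneg fun _ _ => hf0 _, fun v' => ?_⟩
        rw [sum_comm]
        exact hf1 v v'
      refine le_trans (le_of_eq ?_) (hH _ hb)
      rw [Fintype.sum_prod_type]
      refine sum_congr rfl fun u' _ => ?_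
      rw [mul_sum]
      refine sum_congr rfl fun α' _ => ?_
      simp only [h]
      rw [← mul_sum, mul_pow, Real.sq_sqrt (H.pr_wU_nonneg u')]
      congr 2
      simp only [pr_op_eq, mul_sum]
      rw [sum_comm])
  refine le_trans (le_of_eq ?_) this
  simp only [h, pr_norm_smul, Real.sq_sqrt (H.pr_wU_nonneg _)]
  have e1 : (G.tensor H).normUsq ((G.tensor H).op f) =
      ∑ u : G.Q1 × H.Q1, (G.wU u.1 * H.wU u.2) * ∑ α : G.A × H.A,
        (G.op (fun p => H.op (fun q => f ((p.1, q.1), (p.2, q.2))) (u.2, α.2)) (u.1, α.1)) ^ 2 := by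
    unfold normUsq
    refine Finset.sum_congr (M := ℝ) rfl fun u _ => ?_
    obtain ⟨u, u'⟩ := u
    rw [pr_tensor_wU]
    congr 1
    refine Finset.sum_congr rfl fun α _ => ?_
    obtain ⟨α, α'⟩ := α
    rw [pr_tensor_op]
  rw [e1]
  simp only [normUsq, Fintype.sum_prod_type, mul_sum]
  rw [sum_comm]
  refine sum_congr rfl fun u' _ => ?_
  conv_rhs => rw [sum_comm]
  refine sum_congr rfl fun u _ => ?_
  rw [sum_comm]
  exact sum_congr rfl fun α' _ => sum_congr rfl fun α _ => by ring

theorem pr_iter_norm (G : ProjGame) (ρ : ℝ) (hρ0 : 0 ≤ ρ) (hρ1 : ρ ≤ 1) (hval : G.val ≤ ρ) (n : ℕ) :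
    ∀ f, (G.iterTensor n).IsBob f →
      (G.iterTensor n).normUsq ((G.iterTensor n).op f) ≤ Real.sqrt (4 * ρ) ^ (n + 1) := by
  induction n with
  | zero =>
    intro f hf
    refine (G.pr_norm_le_val f hf).trans (hval.trans ?_)
    rw [zero_add, pow_one]
    exact Real.le_sqrt_of_sq_le (by nlinarith)
  | succ n ih =>
    intro f hf
    rw [pow_succ']
    exact pr_tensor_norm G (G.iterTensor n) ρ _ hval (by positivity) ih f hf

end ProjGame

/-- **Repetition of games with small value.** For any projection game `G` with
`val(G) ≤ ρ`, `val(G^{⊗k}) ≤ (4ρ)^{k/4}`. -/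
theorem parallel_repetition_small_value (G : ProjGame) (ρ : ℝ) (hρ0 : 0 ≤ ρ) (hρ1 : ρ ≤ 1)
    (hval : G.val ≤ ρ) (k : ℕ) (hk : 0 < k) :
    (G.iterTensor (k - 1)).val ≤ (4 * ρ) ^ ((k : ℝ) / 4) := by

  obtain ⟨n, rfl⟩ : ∃ n, k = n + 1 := ⟨k - 1, by omega⟩
  rw [Nat.add_sub_cancel]
  refine Real.sSup_le ?_ (Real.rpow_nonneg (by linarith) _)
  rintro x ⟨f, g, hf, hg, rfl⟩
  have h1 := ((G.iterTensor n).pr_inn_sq g _ hg).trans (G.pr_iter_norm ρ hρ0 hρ1 hval n f hf)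
  refine (Real.le_sqrt_of_sq_le h1).trans (le_of_eq ?_)
  have h4 : 0 ≤ 4 * ρ := by linarith
  rw [Real.sqrt_eq_rpow, Real.sqrt_eq_rpow, ← Real.rpow_natCast, ← Real.rpow_mul h4,
    ← Real.rpow_mul h4]
  congr 1
  push_cast
  ring
end
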